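/- arXiv:1303.1960 — 4 statements merged into one kernel-verified Lean document; each statement's English description precedes it below -/
import Mathlib

section
/- Let A be an m×n real matrix with all entries nonnegative whose (classical) rank equals 3. Then the nonnegative rank of A is at most ⌈6·min{m,n}/7⌉; that is, there exist an m×⌈6·min{m,n}/7⌉ matrix B and a ⌈6·min{m,n}/7⌉×n matrix C, both with all entries nonnegative, such that A = B·C. -/
/-- Factorization through `k` nonnegative coordinates. -/
def NR {ι κ : Type*} (A : ι → κ → ℝ) (k : ℕ) : Prop :=
  ∃ (B : ι → Fin k → ℝ) (C : Fin k → κ → ℝ),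
    (∀ i t, 0 ≤ B i t) ∧ (∀ t j, 0 ≤ C t j) ∧ ∀ i j, A i j = ∑ t, B i t * C t j

/-- The pairing of two vectors in three-space. -/
def val (x w : Fin 3 → ℝ) : ℝ := x 0 * w 0 + x 1 * w 1 + x 2 * w 2

/-- The determinant of three vectors in three-space. -/
def d3 (x y z : Fin 3 → ℝ) : ℝ :=
  x 0 * (y 1 * z 2 - y 2 * z 1) - x 1 * (y 0 * z 2 - y 2 * z 0) + x 2 * (y 0 * z 1 - y 1 * z 0)

lemma d3_cyc (x y z : Fin 3 → ℝ) : d3 y z x = d3 x y z := by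
  unfold d3; ring

lemma d3_swap (x y z : Fin 3 → ℝ) : d3 x z y = - d3 x y z := by
  unfold d3; ring

lemma val_rel (a b c e w : Fin 3 → ℝ) :
    d3 b c e * val a w - d3 a c e * val b w + d3 a b e * val c w - d3 a b c * val e w = 0 := by
  unfold d3 val; ring

/-- Cyclically ordered configuration. -/
def Pos7 (p : Fin 7 → Fin 3 → ℝ) : Prop :=
  ∀ i j k : Fin 7, i < j → j < k → 0 < d3 (p i) (p j) (p k)

lemma Pos7.shift1 {p : Fin 7 → Fin 3 → ℝ} (h : Pos7 p) : Pos7 (fun i => p (i + 1)) := by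
  intro i j k hij hjk
  by_cases hk : k = 6
  · subst hk
    have := h 0 (i+1) (j+1) (by omega) (by omega)
    rw [← d3_cyc] at this
    exact this
  · exact h _ _ _ (by omega) (by omega)

lemma Pos7.shift {p : Fin 7 → Fin 3 → ℝ} (h : Pos7 p) (s : Fin 7) :
    Pos7 (fun i => p (i + s)) := by
  have key : ∀ n : ℕ, Pos7 (fun i => p (i + Fin.ofNat 7 n)) := by
    intro n
    induction n with
    | zero => simpa using h
    | succ n ih =>
      have := ih.shift1
      convert this using 3 with i
      apply Fin.ext
      simp [Fin.val_add, Fin.ofNat]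
      omega
  have := key s.val
  simpa using this

lemma L1 {p : Fin 7 → Fin 3 → ℝ} (h : Pos7 p) :
    d3 (p 1) (p 2) (p 3) * d3 (p 4) (p 5) (p 6) < d3 (p 1) (p 2) (p 4) * d3 (p 3) (p 5) (p 6) := by
  have e1 : d3 (p 1) (p 2) (p 4) * d3 (p 1) (p 3) (p 5) - d3 (p 1) (p 2) (p 3) * d3 (p 1) (p 4) (p 5)
    = d3 (p 1) (p 2) (p 5) * d3 (p 1) (p 3) (p 4) := by unfold d3; ring
  have e2 : d3 (p 1) (p 4) (p 5) * d3 (p 3) (p 5) (p 6) - d3 (p 1) (p 3) (p 5) * d3 (p 4) (p 5) (p 6)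
    = d3 (p 1) (p 5) (p 6) * d3 (p 3) (p 4) (p 5) := by unfold d3; ring
  have h135 := h 1 3 5 (by decide) (by decide)
  have h125 := h 1 2 5 (by decide) (by decide)
  have h134 := h 1 3 4 (by decide) (by decide)
  have h156 := h 1 5 6 (by decide) (by decide)
  have h345 := h 3 4 5 (by decide) (by decide)
  have h356 := h 3 5 6 (by decide) (by decide)
  have h123 := h 1 2 3 (by decide) (by decide)
  have m1 := mul_pos (mul_pos h125 h134) h356
  have m2 := mul_pos (mul_pos h156 h345) h123
  rw [← e1] at m1
  rw [← e2] at m2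
  have : 0 < d3 (p 1) (p 3) (p 5) * (d3 (p 1) (p 2) (p 4) * d3 (p 3) (p 5) (p 6)
    - d3 (p 1) (p 2) (p 3) * d3 (p 4) (p 5) (p 6)) := by linarith
  have := pos_of_mul_pos_right this h135.le
  linarith

lemma L2 {p : Fin 7 → Fin 3 → ℝ} (h : Pos7 p) :
    d3 (p 0) (p 1) (p 2) * d3 (p 2) (p 3) (p 4) < d3 (p 1) (p 2) (p 4) * d3 (p 0) (p 2) (p 3) := by
  have e : d3 (p 1) (p 2) (p 4) * d3 (p 0) (p 2) (p 3) - d3 (p 0) (p 1) (p 2) * d3 (p 2) (p 3) (p 4)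
    = d3 (p 0) (p 2) (p 4) * d3 (p 1) (p 2) (p 3) := by unfold d3; ring
  have := mul_pos (h 0 2 4 (by decide) (by decide)) (h 1 2 3 (by decide) (by decide))
  linarith

lemma L3 {p : Fin 7 → Fin 3 → ℝ} (h : Pos7 p) :
    d3 (p 0) (p 1) (p 2) * d3 (p 1) (p 3) (p 4) < d3 (p 0) (p 1) (p 3) * d3 (p 1) (p 2) (p 4) := by
  have e : d3 (p 0) (p 1) (p 3) * d3 (p 1) (p 2) (p 4) - d3 (p 0) (p 1) (p 2) * d3 (p 1) (p 3) (p 4)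
    = d3 (p 0) (p 1) (p 4) * d3 (p 1) (p 2) (p 3) := by unfold d3; ring
  have := mul_pos (h 0 1 4 (by decide) (by decide)) (h 1 2 3 (by decide) (by decide))
  linarith

lemma L4 {p : Fin 7 → Fin 3 → ℝ} (h : Pos7 p) :
    d3 (p 0) (p 1) (p 3) * d3 (p 2) (p 3) (p 4) < d3 (p 0) (p 2) (p 3) * d3 (p 1) (p 3) (p 4) := by
  have e : d3 (p 0) (p 2) (p 3) * d3 (p 1) (p 3) (p 4) - d3 (p 0) (p 1) (p 3) * d3 (p 2) (p 3) (p 4)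
    = d3 (p 0) (p 3) (p 4) * d3 (p 1) (p 2) (p 3) := by unfold d3; ring
  have := mul_pos (h 0 3 4 (by decide) (by decide)) (h 1 2 3 (by decide) (by decide))
  linarith

lemma two_ineq {a b u v x y z t : ℝ} (ha : 0 < a) (hb : 0 < b) (hu : 0 < u) (hv : 0 < v)
    (h1 : a * u < x * y) (h2 : b * v < z * t) : (a * b) * (u * v) < (x * z) * (y * t) := by
  have := mul_lt_mul'' h1 h2 (by positivity) (by positivity)
  linarith

/-- The combinatorial heart: some vertex is good. -/
lemma exists_good (D al be : Fin 7 → ℝ) (hD : ∀ i, 0 < D i) (hal : ∀ i, 0 < al i)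
    (hbe : ∀ i, 0 < be i)
    (l1 : ∀ j, D (j+1) * D (j+4) < al j * be (j+2))
    (l2 : ∀ j, D j * D (j+2) < al j * be (j+6))
    (l3 : ∀ j, D (j+1) * be (j+1) < al j * al (j+1))
    (l4 : ∀ j, al j * D (j+3) < be j * be (j+1)) :
    ∃ j, D j * D (j+4) ≤ al j * D (j+5) ∧ D (j+5) * D (j+1) ≤ be (j+2) * D j := by
  by_contra hcon
  push Not at hcon
  have step : ∀ j, al j * D (j+5) < D j * D (j+4) → al (j+4) * D (j+4+5) < D (j+4) * D (j+4+4) := by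
    intro j hA
    by_contra hn
    push Not at hn
    have hB := hcon (j+4) hn
    have e1 : j + 4 + 2 = j + 6 := by omega
    have e2 : j + 4 + 5 = j + 2 := by omega
    have e3 : j + 4 + 1 = j + 5 := by omega
    rw [e1, e2, e3] at hB
    have h := two_ineq (hal j) (hbe _) (hD _) (hD _) hA hB
    have h2 := mul_lt_mul_of_pos_right (l2 j) (mul_pos (hD (j+5)) (hD (j+4)))
    nlinarith
  by_cases hex : ∃ j, al j * D (j+5) < D j * D (j+4)
  · obtain ⟨j, hj⟩ := hex
    have hall : ∀ i, al i * D (i+5) < D i * D (i+4) := by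
      intro i
      have s1 := step _ hj
      have s2 := step _ s1
      have s3 := step _ s2
      have s4 := step _ s3
      have s5 := step _ s4
      have s6 := step _ s5
      have key : ∀ i j : Fin 7, i = j ∨ i = j+4 ∨ i = j+4+4 ∨ i = j+4+4+4 ∨ i = j+4+4+4+4 ∨
        i = j+4+4+4+4+4 ∨ i = j+4+4+4+4+4+4 := by decide
      rcases key i j with h|h|h|h|h|h|h
      · rw [h]; exact hj
      · rw [h]; exact s1
      · rw [h]; exact s2
      · rw [h]; exact s3
      · rw [h]; exact s4
      · rw [h]; exact s5
      · rw [h]; exact s6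
    have a0 := hall 0
    have a1 := hall 1
    have a6 := hall 6
    have g1 := l3 0
    have g2 := l1 6
    simp only [show (0:Fin 7)+5=5 from rfl, show (0:Fin 7)+4=4 from rfl, show (1:Fin 7)+5=6 from rfl,
      show (1:Fin 7)+4=5 from rfl, show (6:Fin 7)+5=4 from rfl, show (6:Fin 7)+4=3 from rfl,
      show (0:Fin 7)+1=1 from rfl, show (6:Fin 7)+1=0 from rfl, show (6:Fin 7)+2=1 from rfl] at a0 a1 a6 g1 g2
    have h := two_ineq (hal 0) (hal 1) (hD _) (hD _) a0 a1
    have h2 := mul_lt_mul_of_pos_right g1 (mul_pos (hD 5) (hD 6))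
    have h3 : be 1 * D 6 < D 0 * D 4 := by
      have : (D 1 * D 5) * (be 1 * D 6) < (D 1 * D 5) * (D 0 * D 4) := by nlinarith
      exact lt_of_mul_lt_mul_left this (mul_pos (hD 1) (hD 5)).le
    have h4 := two_ineq (hal 6) (hbe 1) (hD _) (hD _) a6 h3
    have h5 := mul_lt_mul_of_pos_right g2 (mul_pos (hD 4) (hD 6))
    nlinarith
  · push Not at hex
    have hall : ∀ i, be (i+2) * D i < D (i+5) * D (i+1) := fun i => hcon i (hex i)
    have b5 := hall 5
    have b6 := hall 6
    have b0 := hall 0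
    have g1 := l4 0
    have g2 := l1 0
    simp only [show (5:Fin 7)+5=3 from rfl, show (5:Fin 7)+2=0 from rfl, show (5:Fin 7)+1=6 from rfl,
      show (6:Fin 7)+5=4 from rfl, show (0:Fin 7)+5=5 from rfl, show (0:Fin 7)+4=4 from rfl,
      show (0:Fin 7)+2=2 from rfl, show (0:Fin 7)+3=3 from rfl,
      show (0:Fin 7)+1=1 from rfl, show (6:Fin 7)+1=0 from rfl, show (6:Fin 7)+2=1 from rfl] at b5 b6 b0 g1 g2
    have h := two_ineq (hbe 0) (hbe 1) (hD _) (hD _) b5 b6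
    have h2 := mul_lt_mul_of_pos_right g1 (mul_pos (hD 5) (hD 6))
    have h3 : al 0 * D 5 < D 4 * D 0 := by
      have : (D 3 * D 6) * (al 0 * D 5) < (D 3 * D 6) * (D 4 * D 0) := by nlinarith
      exact lt_of_mul_lt_mul_left this (mul_pos (hD 3) (hD 6)).le
    have h4 := two_ineq (hal 0) (hbe 2) (hD _) (hD _) h3 b0
    have h5 := mul_lt_mul_of_pos_right g2 (mul_pos (hD 5) (hD 0))
    nlinarith

lemma exists_shift {p : Fin 7 → Fin 3 → ℝ} (h : Pos7 p) :
    ∃ s : Fin 7, 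
      d3 (p (0+s)) (p (1+s)) (p (2+s)) * d3 (p (4+s)) (p (5+s)) (p (6+s))
        ≤ d3 (p (1+s)) (p (2+s)) (p (4+s)) * d3 (p (0+s)) (p (5+s)) (p (6+s)) ∧
      d3 (p (0+s)) (p (5+s)) (p (6+s)) * d3 (p (1+s)) (p (2+s)) (p (3+s))
        ≤ d3 (p (3+s)) (p (5+s)) (p (6+s)) * d3 (p (0+s)) (p (1+s)) (p (2+s)) := by
  obtain ⟨j, h1, h2⟩ := exists_good (fun j => d3 (p (j+6)) (p j) (p (j+1)))
    (fun j => d3 (p j) (p (j+1)) (p (j+3))) (fun j => d3 (p j) (p (j+2)) (p (j+3)))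
    (fun j => by
      have := h.shift (j+6) 0 1 2 (by decide) (by decide)
      dsimp only at this
      rwa [show 0 + (j+6) = j + 6 by omega, show 1 + (j+6) = j by omega,
        show 2 + (j+6) = j+1 by omega] at this)
    (fun j => by
      have := h.shift j 0 1 3 (by decide) (by decide)
      dsimp only at this
      rwa [show 0 + j = j by omega, show 1 + j = j+1 by omega,
        show 3 + j = j+3 by omega] at this)
    (fun j => by
      have := h.shift j 0 2 3 (by decide) (by decide)
      dsimp only at this
      rwa [show 0 + j = j by omega, show 2 + j = j+2 by omega,
        show 3 + j = j+3 by omega] at this)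
    (fun j => by
      have := L1 (h.shift (j+6))
      beta_reduce at this ⊢
      rw [show 1 + (j+6) = j by omega, show 2 + (j+6) = j+1 by omega,
        show 3 + (j+6) = j+2 by omega, show 4 + (j+6) = j+3 by omega,
        show 5 + (j+6) = j+4 by omega, show 6 + (j+6) = j+5 by omega] at this
      rw [show j+1+6 = j by omega, show j+1+1 = j+2 by omega, show j+4+6=j+3 by omega,
        show j+4+1=j+5 by omega, show j+2+2=j+4 by omega, show j+2+3=j+5 by omega]
      exact this)
    (fun j => by
      have := L2 (h.shift (j+6))
      beta_reduce at this ⊢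
      rw [show 0 + (j+6) = j+6 by omega, show 1 + (j+6) = j by omega, show 2 + (j+6) = j+1 by omega,
        show 3 + (j+6) = j+2 by omega, show 4 + (j+6) = j+3 by omega] at this
      rw [show j+2+6 = j+1 by omega, show j+2+1 = j+3 by omega, show j+6+2=j+1 by omega,
        show j+6+3=j+2 by omega]
      exact this)
    (fun j => by
      have := L3 (h.shift j)
      beta_reduce at this ⊢
      rw [show 0 + j = j by omega, show 1 + j = j+1 by omega, show 2 + j = j+2 by omega,
        show 3 + j = j+3 by omega, show 4 + j = j+4 by omega] at this
      rw [show j+1+6 = j by omega, show j+1+1 = j+2 by omega, show j+1+2=j+3 by omega,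
        show j+1+3=j+4 by omega]
      exact this)
    (fun j => by
      have := L4 (h.shift j)
      beta_reduce at this ⊢
      rw [show 0 + j = j by omega, show 1 + j = j+1 by omega, show 2 + j = j+2 by omega,
        show 3 + j = j+3 by omega, show 4 + j = j+4 by omega] at this
      rw [show j+3+6 = j+2 by omega, show j+3+1 = j+4 by omega, show j+1+2=j+3 by omega,
        show j+1+3=j+4 by omega]
      exact this)
  refine ⟨j+6, ?_⟩
  beta_reduce at h1 h2
  rw [show 0 + (j+6) = j+6 by omega, show 1 + (j+6) = j by omega, show 2 + (j+6) = j+1 by omega,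
        show 3 + (j+6) = j+2 by omega, show 4 + (j+6) = j+3 by omega,
        show 5 + (j+6) = j+4 by omega, show 6 + (j+6) = j+5 by omega]
  rw [show j+4+6 = j+3 by omega, show j+4+1 = j+5 by omega, show j+5+6 = j+4 by omega,
    show j+5+1 = j+6 by omega] at h1
  rw [show j+5+6 = j+4 by omega, show j+5+1 = j+6 by omega, show j+1+6 = j by omega,
    show j+1+1 = j+2 by omega, show j+2+2 = j+4 by omega, show j+2+3 = j+5 by omega] at h2
  have e := d3_cyc (p (j+6)) (p (j+4)) (p (j+5))
  rw [e] at h1 h2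
  exact ⟨h1, h2⟩

lemma grid {r0 r1 r2 r3 r4 r5 r6 : ℝ} (h0 : 0 ≤ r0) (h1 : 0 ≤ r1) (h2 : 0 ≤ r2) (h3 : 0 ≤ r3)
    (h4 : 0 ≤ r4) (h5 : 0 ≤ r5) (h6 : 0 ≤ r6) (e1 : r0 + r2 = r1 + r3) (e2 : r0 + r5 = r4 + r6)
    (hx : r0 ≤ r1 + r4) (hy : r0 ≤ r6 + r3) :
    ∃ C : Fin 6 → ℝ, (∀ t, 0 ≤ C t) ∧ r0 = C 2 + C 5 ∧ r1 = C 0 + C 5 ∧ r2 = C 0 + C 4 ∧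
      r3 = C 2 + C 4 ∧ r4 = C 2 + C 3 ∧ r5 = C 1 + C 3 ∧ r6 = C 1 + C 5 := by
  obtain ⟨t, ht0, ht1, ht6, ht, htt⟩ : ∃ t, t ≤ r0 ∧ t ≤ r1 ∧ t ≤ r6 ∧ 0 ≤ t ∧ 
      (t = r0 ∨ t = r1 ∨ t = r6) := by
    rcases le_total r0 r1 with a | a <;> rcases le_total r0 r6 with b | b <;>
      rcases le_total r1 r6 with c | c
    all_goals first
      | exact ⟨r0, by linarith, by linarith, by linarith, h0, by simp⟩
      | exact ⟨r1, by linarith, by linarith, by linarith, h1, by simp⟩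
      | exact ⟨r6, by linarith, by linarith, by linarith, h6, by simp⟩
  refine ⟨![r1 - t, r6 - t, r0 - t, r4 - r0 + t, r3 - r0 + t, t], ?_, ?_, ?_, ?_, ?_, ?_, ?_, ?_⟩
  · rw [Fin.forall_fin_succ, Fin.forall_fin_succ, Fin.forall_fin_succ, Fin.forall_fin_succ,
      Fin.forall_fin_succ, Fin.forall_fin_succ]
    simp
    rcases htt with rfl | rfl | rfl <;> refine ⟨?_, ?_, ?_, ?_, ?_, ?_⟩ <;> linarith
  all_goals simp; try linarith

lemma hept0 {κ : Type*} (p : Fin 7 → Fin 3 → ℝ) (w : κ → Fin 3 → ℝ)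
    (hn : ∀ i j, 0 ≤ val (p i) (w j)) (h : Pos7 p)
    (c1 : d3 (p 0) (p 1) (p 2) * d3 (p 4) (p 5) (p 6) ≤ d3 (p 1) (p 2) (p 4) * d3 (p 0) (p 5) (p 6))
    (c2 : d3 (p 0) (p 5) (p 6) * d3 (p 1) (p 2) (p 3) ≤ d3 (p 3) (p 5) (p 6) * d3 (p 0) (p 1) (p 2)) :
    NR (fun i j => val (p i) (w j)) 6 := by
  have h123 := h 1 2 3 (by decide) (by decide)
  have h023 := h 0 2 3 (by decide) (by decide)
  have h013 := h 0 1 3 (by decide) (by decide)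
  have h012 := h 0 1 2 (by decide) (by decide)
  have h456 := h 4 5 6 (by decide) (by decide)
  have h056 := h 0 5 6 (by decide) (by decide)
  have h046 := h 0 4 6 (by decide) (by decide)
  have h045 := h 0 4 5 (by decide) (by decide)
  have h124 := h 1 2 4 (by decide) (by decide)
  have h014 := h 0 1 4 (by decide) (by decide)
  have h356 := h 3 5 6 (by decide) (by decide)
  have h036 := h 0 3 6 (by decide) (by decide)
  have h234 := h 2 3 4 (by decide) (by decide)
  have h345 := h 3 4 5 (by decide) (by decide)
  obtain ⟨s1, hs1⟩ : ∃ s, s = d3 (p 0) (p 2) (p 3) / d3 (p 1) (p 2) (p 3) := ⟨_, rfl⟩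
  obtain ⟨s2, hs2⟩ : ∃ s, s = d3 (p 0) (p 1) (p 3) / d3 (p 1) (p 2) (p 3) := ⟨_, rfl⟩
  obtain ⟨s3, hs3⟩ : ∃ s, s = d3 (p 0) (p 1) (p 2) / d3 (p 1) (p 2) (p 3) := ⟨_, rfl⟩
  obtain ⟨s4, hs4⟩ : ∃ s, s = d3 (p 0) (p 5) (p 6) / d3 (p 4) (p 5) (p 6) := ⟨_, rfl⟩
  obtain ⟨s5, hs5⟩ : ∃ s, s = d3 (p 0) (p 4) (p 6) / d3 (p 4) (p 5) (p 6) := ⟨_, rfl⟩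
  obtain ⟨s6, hs6⟩ : ∃ s, s = d3 (p 0) (p 4) (p 5) / d3 (p 4) (p 5) (p 6) := ⟨_, rfl⟩
  have p1 : 0 < s1 := by rw [hs1]; positivity
  have p2 : 0 < s2 := by rw [hs2]; positivity
  have p3 : 0 < s3 := by rw [hs3]; positivity
  have p4 : 0 < s4 := by rw [hs4]; positivity
  have p5 : 0 < s5 := by rw [hs5]; positivity
  have p6 : 0 < s6 := by rw [hs6]; positivity
  rw [eq_div_iff h123.ne'] at hs1 hs2 hs3
  rw [eq_div_iff h456.ne'] at hs4 hs5 hs6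
  -- coefficient inequalities
  have k1 : d3 (p 0) (p 2) (p 4) ≤ s1 * d3 (p 1) (p 2) (p 4) := by
    have e : d3 (p 0) (p 2) (p 3) * d3 (p 1) (p 2) (p 4) - d3 (p 0) (p 2) (p 4) * d3 (p 1) (p 2) (p 3)
      = d3 (p 0) (p 1) (p 2) * d3 (p 2) (p 3) (p 4) := by unfold d3; ring
    have := mul_pos h012 h234
    rw [← hs1] at e
    refine le_of_mul_le_mul_right ?_ h123
    linarith
  have k2 : d3 (p 0) (p 1) (p 2) ≤ s4 * d3 (p 1) (p 2) (p 4) := by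
    refine le_of_mul_le_mul_right ?_ h456
    rw [← hs4] at c1
    linarith
  have k3 : d3 (p 0) (p 3) (p 5) ≤ s6 * d3 (p 3) (p 5) (p 6) := by
    have e : d3 (p 0) (p 4) (p 5) * d3 (p 3) (p 5) (p 6) - d3 (p 0) (p 3) (p 5) * d3 (p 4) (p 5) (p 6)
      = d3 (p 0) (p 5) (p 6) * d3 (p 3) (p 4) (p 5) := by unfold d3; ring
    have := mul_pos h056 h345
    rw [← hs6] at e
    refine le_of_mul_le_mul_right ?_ h456
    linarith
  have k4 : d3 (p 0) (p 5) (p 6) ≤ s3 * d3 (p 3) (p 5) (p 6) := by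
    refine le_of_mul_le_mul_right ?_ h123
    rw [← hs3] at c2
    linarith
  have main : ∀ j, ∃ C : Fin 6 → ℝ, (∀ t, 0 ≤ C t) ∧ val (p 0) (w j) = C 2 + C 5 ∧
      s1 * val (p 1) (w j) = C 0 + C 5 ∧ s2 * val (p 2) (w j) = C 0 + C 4 ∧
      s3 * val (p 3) (w j) = C 2 + C 4 ∧ s4 * val (p 4) (w j) = C 2 + C 3 ∧
      s5 * val (p 5) (w j) = C 1 + C 3 ∧ s6 * val (p 6) (w j) = C 1 + C 5 := by
    intro j
    have n0 := hn 0 j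
    have n1 := hn 1 j
    have n2 := hn 2 j
    have n3 := hn 3 j
    have n4 := hn 4 j
    have n5 := hn 5 j
    have n6 := hn 6 j
    apply grid n0 (by positivity) (by positivity) (by positivity) (by positivity) (by positivity)
      (by positivity)
    · have := val_rel (p 0) (p 1) (p 2) (p 3) (w j)
      rw [← hs1, ← hs2, ← hs3] at this
      refine mul_right_cancel₀ h123.ne' ?_
      linarith
    · have := val_rel (p 0) (p 4) (p 5) (p 6) (w j)
      rw [← hs4, ← hs5, ← hs6] at this
      refine mul_right_cancel₀ h456.ne' ?_
      linarith
    · have := val_rel (p 0) (p 1) (p 2) (p 4) (w j)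
      refine le_of_mul_le_mul_left ?_ h124
      have m1 := mul_le_mul_of_nonneg_right k1 n1
      have m2 := mul_le_mul_of_nonneg_right k2 n4
      have m3 := mul_nonneg h014.le n2
      linarith
    · have := val_rel (p 0) (p 3) (p 5) (p 6) (w j)
      refine le_of_mul_le_mul_left ?_ h356
      have m1 := mul_le_mul_of_nonneg_right k3 n6
      have m2 := mul_le_mul_of_nonneg_right k4 n3
      have m3 := mul_nonneg h036.le n5
      linarith
  choose C hC0 e0 e1 e2 e3 e4 e5 e6 using main
  refine ⟨![![0,0,1,0,0,1], ![1/s1,0,0,0,0,1/s1], ![1/s2,0,0,0,1/s2,0], ![0,0,1/s3,0,1/s3,0],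
    ![0,0,1/s4,1/s4,0,0], ![0,1/s5,0,1/s5,0,0], ![0,1/s6,0,0,0,1/s6]], fun t j => C j t, ?_,
    fun t j => hC0 j t, ?_⟩
  · intro i t
    fin_cases i <;> fin_cases t <;> simp <;> positivity
  · intro i j
    have f0 := e0 j
    have f1 := e1 j
    have f2 := e2 j
    have f3 := e3 j
    have f4 := e4 j
    have f5 := e5 j
    have f6 := e6 j
    rw [mul_comm, ← eq_div_iff (by positivity)] at f1 f2 f3 f4 f5 f6
    fin_cases i <;> simp [Fin.sum_univ_succ] <;> simp [f0, f1, f2, f3, f4, f5, f6] <;> ring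

lemma NR.reindex {ι ι' κ : Type*} {A : ι → κ → ℝ} {k : ℕ} (e : ι' ≃ ι)
    (h : NR (fun i j => A (e i) j) k) : NR A k := by
  obtain ⟨B, C, hB, hC, hh⟩ := h
  refine ⟨fun i => B (e.symm i), C, fun i t => hB _ _, hC, fun i j => ?_⟩
  have := hh (e.symm i) j
  simpa using this

lemma hept {κ : Type*} (p : Fin 7 → Fin 3 → ℝ) (w : κ → Fin 3 → ℝ)
    (hn : ∀ i j, 0 ≤ val (p i) (w j)) (h : Pos7 p) :
    NR (fun i j => val (p i) (w j)) 6 := by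
  obtain ⟨s, c1, c2⟩ := exists_shift h
  exact NR.reindex (Equiv.addRight s)
    (hept0 (fun i => p (i + s)) w (fun i j => hn _ j) (h.shift s) c1 c2)

lemma NR.mono {ι κ : Type*} {A : ι → κ → ℝ} {k l : ℕ} (h : NR A k) (hkl : k ≤ l) : NR A l := by
  obtain ⟨B, C, hB, hC, hh⟩ := h
  obtain ⟨c, rfl⟩ := Nat.exists_eq_add_of_le hkl
  refine ⟨fun i => Fin.append (B i) 0, Fin.append C 0, ?_, ?_, ?_⟩
  · intro i t
    refine Fin.addCases (fun t => ?_) (fun t => ?_) t <;> simp [hB]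
  · intro t
    refine Fin.addCases (fun t => ?_) (fun t => ?_) t <;> simp [hC]
  · intro i j
    simp [Fin.sum_univ_add, hh]

lemma NR.add {m m' : ℕ} {κ : Type*} {A : Fin (m + m') → κ → ℝ} {k l : ℕ}
    (h : NR (fun i j => A (Fin.castAdd m' i) j) k) (h' : NR (fun i j => A (Fin.natAdd m i) j) l) :
    NR A (k + l) := by
  obtain ⟨B, C, hB, hC, hh⟩ := h
  obtain ⟨B', C', hB', hC', hh'⟩ := h'
  refine ⟨Fin.append (fun i => Fin.append (B i) 0) (fun i => Fin.append 0 (B' i)),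
    Fin.append C C', ?_, ?_, ?_⟩
  · intro i t
    refine Fin.addCases (fun i => ?_) (fun i => ?_) i <;>
      refine Fin.addCases (fun t => ?_) (fun t => ?_) t <;> simp [hB, hB']
  · intro t
    refine Fin.addCases (fun t => ?_) (fun t => ?_) t <;> simp [hC, hC']
  · intro i j
    refine Fin.addCases (fun i => ?_) (fun i => ?_) i
    · simp [Fin.sum_univ_add, hh]
    · simp [Fin.sum_univ_add, hh']

lemma NR.self {m : ℕ} {κ : Type*} {A : Fin m → κ → ℝ} (h : ∀ i j, 0 ≤ A i j) : NR A m := by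
  refine ⟨fun i t => if i = t then 1 else 0, A, ?_, h, ?_⟩
  · intro i t
    dsimp only
    split_ifs <;> norm_num
  · intro i j
    simp

/-- Row `i` is a nonnegative combination of the other rows. -/
def Red {κ : Type*} (A : Fin 7 → κ → ℝ) (i : Fin 7) : Prop :=
  ∃ c : Fin 7 → ℝ, (∀ k, 0 ≤ c k) ∧ c i = 0 ∧ ∀ j, A i j = ∑ k, c k * A k j

lemma Red.nr {κ : Type*} {A : Fin 7 → κ → ℝ} {i : Fin 7} (h : Red A i) (hA : ∀ i j, 0 ≤ A i j) :
    NR A 6 := by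
  obtain ⟨c, hc, hi, hh⟩ := h
  refine ⟨fun r t => if r = i then c (i.succAbove t) else if r = i.succAbove t then 1 else 0,
    fun t => A (i.succAbove t), ?_, fun t => hA _, ?_⟩
  · intro r t
    dsimp only
    split_ifs <;> simp [hc]
  · intro r j
    by_cases hr : r = i
    · subst hr
      rw [hh j, Fin.sum_univ_succAbove _ r, hi]
      simp
    · obtain ⟨t, rfl⟩ := Fin.exists_succAbove_eq hr
      simp [Fin.succAbove_ne]

lemma noRel {κ : Type*} {A : Fin 7 → κ → ℝ} (H : ∀ i, ¬ Red A i) {a b c e : Fin 7}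
    (hb : b ≠ a) (hc : c ≠ a) (he : e ≠ a) {x y z u : ℝ} (hx : 0 < x) (hy : 0 ≤ y) (hz : 0 ≤ z)
    (hu : 0 ≤ u) (h : ∀ j, x * A a j = y * A b j + z * A c j + u * A e j) : False := by
  apply H a
  refine ⟨fun k => (if k = b then y / x else 0) + (if k = c then z / x else 0) +
    (if k = e then u / x else 0), ?_, ?_, ?_⟩
  · intro k
    have : 0 ≤ y / x := by positivity
    have : 0 ≤ z / x := by positivity
    have : 0 ≤ u / x := by positivity
    dsimp only
    split_ifs <;> linarith
  · simp [hb.symm, hc.symm, he.symm]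
  · intro j
    simp [add_mul, Finset.sum_add_distrib, ite_mul]
    have := h j
    field_simp
    linarith

lemma noZero {κ : Type*} {A : Fin 7 → κ → ℝ} (hA : ∀ i j, 0 ≤ A i j) (H : ∀ i, ¬ Red A i)
    {b c e : Fin 7} {y z u : ℝ} (hy : 0 < y) (hz : 0 ≤ z)
    (hu : 0 ≤ u) (h : ∀ j, y * A b j + z * A c j + u * A e j = 0) : False := by
  apply H b
  refine ⟨0, by simp, rfl, fun j => ?_⟩
  have h1 := mul_nonneg hz (hA c j)
  have h2 := mul_nonneg hu (hA e j)
  have h3 := hA b j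
  have h4 := h j
  have : y * A b j ≤ 0 := by linarith
  have : A b j ≤ 0 := by
    by_contra hh
    push Not at hh
    have := mul_pos hy hh
    linarith
  simp
  linarith

lemma rel3 {κ : Type*} {A : Fin 7 → κ → ℝ} (hA : ∀ i j, 0 ≤ A i j) (H : ∀ i, ¬ Red A i)
    {a b c : Fin 7} (hab : a ≠ b) (hac : a ≠ c) (hbc : b ≠ c) {x y z : ℝ}
    (h : ∀ j, x * A a j + y * A b j + z * A c j = 0) : x = 0 := by
  have key : ∀ x y z : ℝ, (∀ j, x * A a j + y * A b j + z * A c j = 0) → ¬ 0 < x := by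
    intro x y z h hx
    rcases le_or_gt 0 y with hy | hy <;> rcases le_or_gt 0 z with hz | hz
    · exact noZero hA H hx hy hz h
    · exact noRel H (a := c) (b := a) (c := b) (e := b) (x := -z) (y := x) (z := y) (u := 0)
        hac hbc hbc (by linarith) hx.le hy le_rfl (fun j => by linarith [h j])
    · exact noRel H (a := b) (b := a) (c := c) (e := c) (x := -y) (y := x) (z := z) (u := 0)
        hab hbc.symm hbc.symm (by linarith) hx.le hz le_rfl (fun j => by linarith [h j])
    · exact noRel H (a := a) (b := b) (c := c) (e := c) (x := x) (y := -y) (z := -z) (u := 0)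
        hab.symm hac.symm hac.symm hx (by linarith) (by linarith) le_rfl (fun j => by linarith [h j])
  have h1 := key x y z h
  have h2 := key (-x) (-y) (-z) (fun j => by linarith [h j])
  linarith

lemma d3_ne {κ : Type*} {p : Fin 7 → Fin 3 → ℝ} {w : κ → Fin 3 → ℝ}
    (hA : ∀ i j, 0 ≤ val (p i) (w j)) (H : ∀ i, ¬ Red (fun i j => val (p i) (w j)) i)
    {a b c : Fin 7} (hab : a ≠ b) (hac : a ≠ c) (hbc : b ≠ c) : d3 (p a) (p b) (p c) ≠ 0 := by
  intro h0
  have hdet : (Matrix.of ![p a, p b, p c]).det = 0 := by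
    rw [Matrix.det_fin_three]
    simp
    rw [← h0]; unfold d3; ring
  obtain ⟨v, hv, hv0⟩ := Matrix.exists_vecMul_eq_zero_iff.2 hdet
  have g : ∀ t, v 0 * p a t + v 1 * p b t + v 2 * p c t = 0 := by
    intro t
    have := congrFun hv0 t
    simpa [Matrix.vecMul, dotProduct, Fin.sum_univ_three] using this
  have h : ∀ j, v 0 * val (p a) (w j) + v 1 * val (p b) (w j) + v 2 * val (p c) (w j) = 0 := by
    intro j
    unfold val
    linear_combination w j 0 * g 0 + w j 1 * g 1 + w j 2 * g 2
  apply hv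
  have x0 := rel3 hA H hab hac hbc h
  have x1 := rel3 hA H (a := b) (b := a) (c := c) (x := v 1) (y := v 0) (z := v 2)
    hab.symm hbc hac (fun j => by linarith [h j])
  have x2 := rel3 hA H (a := c) (b := a) (c := b) (x := v 2) (y := v 0) (z := v 1)
    hac.symm hbc.symm hab (fun j => by linarith [h j])
  funext t
  fin_cases t
  · exact x0
  · exact x1
  · exact x2

lemma exists_sorted {α : Type*} [Fintype α] (r : α → α → Prop) (n : ℕ) (hn : Fintype.card α = n)
    (irr : ∀ a, ¬ r a a) (tr : ∀ a b c, r a b → r b c → r a c) (tot : ∀ a b, a ≠ b → r a b ∨ r b a) :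
    ∃ e : Fin n ≃ α, ∀ i j, i < j → r (e i) (e j) := by
  classical
  have inst : IsStrictTotalOrder α r :=
    { irrefl := irr
      trans := tr
      trichotomous := fun a b h1 h2 => by
        by_contra hne
        rcases tot a b hne with h | h
        · exact h1 h
        · exact h2 h }
  let _ := linearOrderOfSTO r
  let e := Fintype.orderIsoFinOfCardEq α hn
  exact ⟨e.toEquiv, fun i j hij => e.strictMono hij⟩

lemma seven {κ : Type*} (p : Fin 7 → Fin 3 → ℝ) (w : κ → Fin 3 → ℝ)
    (hA : ∀ i j, 0 ≤ val (p i) (w j)) : NR (fun i j => val (p i) (w j)) 6 := by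
  by_cases H : ∃ i, Red (fun i j => val (p i) (w j)) i
  · obtain ⟨i, hi⟩ := H
    exact hi.nr hA
  push Not at H
  have rel := fun a b c e j => val_rel (p a) (p b) (p c) (p e) (w j)
  obtain ⟨e, he⟩ := exists_sorted (fun i j : Fin 6 => 0 < d3 (p 0) (p i.succ) (p j.succ)) 6 (by simp)
    (by
      intro a
      have : d3 (p 0) (p a.succ) (p a.succ) = 0 := by unfold d3; ring
      simp [this])
    (by
      intro a b c h1 h2
      by_contra h3
      push Not at h3
      have hac : a ≠ c := by
        rintro rfl
        rw [d3_swap] at h2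
        linarith
      rcases lt_or_ge 0 (d3 (p a.succ) (p b.succ) (p c.succ)) with h4 | h4
      · exact noRel H (a := 0) (b := a.succ) (c := b.succ) (e := c.succ) (Fin.succ_ne_zero _)
          (Fin.succ_ne_zero _) (Fin.succ_ne_zero _) h4 h2.le (neg_nonneg.2 h3) h1.le
          (fun j => by linarith [rel 0 a.succ b.succ c.succ j])
      · refine noZero hA H (b := a.succ) (c := c.succ) (e := b.succ) h2 h1.le (neg_nonneg.2 h3)
          (fun j => ?_)
        have g1 := rel 0 a.succ b.succ c.succ j
        have g2 := mul_nonneg (neg_nonneg.2 h4) (hA 0 j)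
        have g3 := mul_nonneg h2.le (hA a.succ j)
        have g4 := mul_nonneg h1.le (hA c.succ j)
        have g5 := mul_nonneg (neg_nonneg.2 h3) (hA b.succ j)
        apply le_antisymm <;> linarith)
    (by
      intro a b hab
      have := d3_ne hA H (a := 0) (b := a.succ) (c := b.succ) (Fin.succ_ne_zero _).symm
        (Fin.succ_ne_zero _).symm (by simpa using hab)
      rcases lt_or_gt_of_ne this with h | h
      · right
        rw [d3_swap]; linarith
      · left; exact h)
  have hinj : Function.Injective (Fin.cons 0 (fun i => (e i).succ) : Fin 7 → Fin 7) := by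
    rw [Fin.cons_injective_iff]
    refine ⟨?_, ?_⟩
    · rintro ⟨i, hi⟩
      exact Fin.succ_ne_zero _ hi
    · intro i j hij
      simpa using hij
  let σ : Fin 7 ≃ Fin 7 := Equiv.ofBijective _ (Finite.injective_iff_bijective.1 hinj)
  have σ0 : σ 0 = 0 := rfl
  have σs : ∀ i : Fin 6, σ i.succ = (e i).succ := fun i => rfl
  refine NR.reindex σ (hept (fun i => p (σ i)) w (fun i j => hA _ _) ?_)
  have base : ∀ i j : Fin 7, 0 < i → i < j → 0 < d3 (p (σ 0)) (p (σ i)) (p (σ j)) := by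
    intro i j hi hij
    obtain ⟨i, rfl⟩ := Fin.exists_succ_eq.2 hi.ne'
    obtain ⟨j, rfl⟩ := Fin.exists_succ_eq.2 (hi.trans hij).ne'
    rw [σ0, σs, σs]
    exact he i j (by simpa using hij)
  intro i j k hij hjk
  rcases eq_or_ne i 0 with rfl | hi
  · exact base j k hij hjk
  have hi : 0 < i := Fin.pos_iff_ne_zero.2 hi
  by_contra hneg
  push Not at hneg
  have b1 := base i j hi hij
  have b2 := base i k hi (hij.trans hjk)
  have b3 := base j k (hi.trans hij) hjk
  refine noRel H (a := σ j) (b := σ i) (c := σ k) (e := σ 0) (σ.injective.ne hij.ne)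
    (σ.injective.ne hjk.ne') (σ.injective.ne (hi.trans hij).ne) b2 b3.le b1.le (neg_nonneg.2 hneg)
    (fun t => ?_)
  linarith [rel (σ 0) (σ i) (σ j) (σ k) t]

lemma general {κ : Type*} (w : κ → Fin 3 → ℝ) (m : ℕ) : ∀ (k : ℕ) (p : Fin m → Fin 3 → ℝ),
    (∀ i j, 0 ≤ val (p i) (w j)) → 6 * m ≤ 7 * k → NR (fun i j => val (p i) (w j)) k := by
  induction m using Nat.strong_induction_on with
  | _ m ih =>
    intro k p hA hk
    rcases lt_or_ge m 7 with hm | hm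
    · exact (NR.self hA).mono (by omega)
    · obtain ⟨m', rfl⟩ := Nat.exists_eq_add_of_le' hm
      obtain ⟨k', rfl⟩ := Nat.exists_eq_add_of_le' (show 6 ≤ k by omega)
      exact NR.add (ih m' (by omega) k' (fun i => p (Fin.castAdd 7 i)) (fun i j => hA _ _) (by omega))
        (seven (fun i => p (Fin.natAdd m' i)) w (fun i j => hA _ _))

lemma exists_vals {m n : ℕ} (A : Matrix (Fin m) (Fin n) ℝ) (h : A.rank = 3) :
    ∃ (p : Fin m → Fin 3 → ℝ) (w : Fin n → Fin 3 → ℝ), ∀ i j, A i j = val (p i) (w j) := by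
  rw [Matrix.rank_eq_finrank_span_cols] at h
  let b := Module.finBasisOfFinrankEq ℝ _ h
  refine ⟨fun i t => (b t : Fin m → ℝ) i,
    fun j t => b.repr ⟨A.col j, Submodule.subset_span ⟨j, rfl⟩⟩ t, fun i j => ?_⟩
  have := b.sum_repr ⟨A.col j, Submodule.subset_span ⟨j, rfl⟩⟩
  have := congrFun (congrArg Subtype.val this) i
  simp only [Fin.sum_univ_three, Submodule.coe_add, Submodule.coe_smul, Pi.add_apply,
    Pi.smul_apply, smul_eq_mul, Matrix.col_apply] at this
  rw [← this]
  unfold val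
  ring


/-- A rank-three nonnegative m×n real matrix has nonnegative rank at most
`⌈6 * min m n / 7⌉`, witnessed by an explicit nonnegative factorization. -/
theorem nonneg_rank_le_of_rank_three (m n : ℕ) (A : Matrix (Fin m) (Fin n) ℝ)
    (hA : ∀ i j, 0 ≤ A i j) (hrank : A.rank = 3) :
    ∃ (B : Matrix (Fin m) (Fin ⌈(6 * (min m n : ℚ)) / 7⌉₊) ℝ)
      (C : Matrix (Fin ⌈(6 * (min m n : ℚ)) / 7⌉₊) (Fin n) ℝ),
      (∀ i j, 0 ≤ B i j) ∧ (∀ i j, 0 ≤ C i j) ∧ A = B * C := by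
  obtain ⟨p, w, hpw⟩ := exists_vals A hrank
  generalize hK : ⌈(6 * (min m n : ℚ)) / 7⌉₊ = K
  have hK' : 6 * min m n ≤ 7 * K := by
    have h1 := Nat.le_ceil ((6 * (min m n : ℚ)) / 7)
    rw [hK] at h1
    rw [div_le_iff₀ (by norm_num)] at h1
    have : ((6 * min m n : ℕ) : ℚ) ≤ ((7 * K : ℕ) : ℚ) := by
      push_cast
      linarith
    exact_mod_cast this
  rcases le_total m n with hmn | hmn
  · rw [min_eq_left hmn] at hK'
    obtain ⟨B, C, hB, hC, hh⟩ := general w m K p (fun i j => by rw [← hpw]; exact hA i j) hK'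
    refine ⟨B, C, hB, hC, ?_⟩
    ext i j
    exact (hpw i j).trans (hh i j)
  · rw [min_eq_right hmn] at hK'
    have hc : ∀ x y, val x y = val y x := fun x y => by unfold val; ring
    obtain ⟨B, C, hB, hC, hh⟩ := general p n K w
      (fun i j => by rw [hc, ← hpw]; exact hA j i) hK'
    refine ⟨fun i t => C t i, fun t j => B j t, fun i t => hC _ _, fun t j => hB _ _, ?_⟩
    ext i j
    refine ((hpw i j).trans (hc _ _)).trans <| (hh j i).trans (Finset.sum_congr rfl fun t _ => mul_comm _ _)
end

section
/- If n ≥ 7, then every m×n real matrix with all entries nonnegative and classical rank equal to 3 has nonnegative rank strictly less than n. -/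
namespace NNRank

abbrev V3 := Fin 3 → ℝ

/-- The determinant of three vectors. -/
def br (a b c : V3) : ℝ :=
  a 0 * (b 1 * c 2 - b 2 * c 1) - a 1 * (b 0 * c 2 - b 2 * c 0) + a 2 * (b 0 * c 1 - b 1 * c 0)

/-- Pairing of a functional with a vector. -/
def ev (f v : V3) : ℝ := f 0 * v 0 + f 1 * v 1 + f 2 * v 2

lemma br_rot (a b c : V3) : br b c a = br a b c := by unfold br; ring

lemma cramer (f a b c d : V3) :
    br b c d * ev f a = br a c d * ev f b - br a b d * ev f c + br a b c * ev f d := by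
  unfold br ev; ring

/-- three-term Pluecker relation with a common point `x` -/
lemma plucker (x a b c d : V3) :
    br x a c * br x b d = br x a b * br x c d + br x a d * br x b c := by
  unfold br; ring

/-- nonnegative factorization through six. -/
def Six {ι : Type*} (M : ι → Fin 7 → ℝ) : Prop :=
  ∃ (G : ι → Fin 6 → ℝ) (C : Fin 6 → Fin 7 → ℝ), (∀ i j, 0 ≤ G i j) ∧ (∀ i j, 0 ≤ C i j) ∧
    ∀ i j, M i j = ∑ l, G i l * C l j

lemma six_reindex {ι : Type*} (M : ι → Fin 7 → ℝ) (e : Fin 7 ≃ Fin 7)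
    (h : Six (fun i j => M i (e j))) : Six M := by
  obtain ⟨G, C, hG, hC, h⟩ := h
  refine ⟨G, fun l j => C l (e.symm j), hG, fun i j => hC _ _, fun i j => ?_⟩
  have := h i (e.symm j)
  simpa using this

lemma six_of_comb {ι : Type*} (M : ι → Fin 7 → ℝ) (hM : ∀ i j, 0 ≤ M i j) (i j k l : Fin 7)
    (hj : i ≠ j) (hk : i ≠ k) (hl : i ≠ l) (s t u : ℝ) (hs : 0 ≤ s) (ht : 0 ≤ t) (hu : 0 ≤ u)
    (h : ∀ r, M r i = s * M r j + t * M r k + u * M r l) : Six M := by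
  let C' : Fin 7 → Fin 7 → ℝ := fun a c =>
    if c = i then (if a = j then s else 0) + (if a = k then t else 0) + (if a = l then u else 0)
    else if a = c then 1 else 0
  refine ⟨fun r a => M r (i.succAbove a), fun a c => C' (i.succAbove a) c,
    fun _ _ => hM _ _, fun a c => ?_, fun r c => ?_⟩
  · dsimp only [C']; split_ifs <;> positivity
  · have h1 := Fin.sum_univ_succAbove (fun a => M r a * C' a c) i
    have h2 : C' i c = 0 := by
      dsimp only [C']
      by_cases hc : c = i
      · simp [hc, hj, hk, hl]
      · simp [hc, Ne.symm hc]
    rw [h2, mul_zero, zero_add] at h1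
    rw [← h1]
    dsimp only [C']
    by_cases hc : c = i
    · subst hc
      simp [mul_add, Finset.sum_add_distrib, h r, mul_comm]
    · simp [hc]

/-- The row computation. -/
lemma row_six (w11 x y z x' y' z' : ℝ) (h1 : w11 + z = x + y) (h2 : w11 + z' = x' + y')
    (p11 : 0 ≤ w11) (px : 0 ≤ x) (py : 0 ≤ y) (pz : 0 ≤ z) (px' : 0 ≤ x') (py' : 0 ≤ y')
    (pz' : 0 ≤ z') (pa : 0 ≤ x + x' - w11) (pb : 0 ≤ y + y' - w11) :
    ∃ U1 U2 U3 W1 W2 W3 : ℝ, 0 ≤ U1 ∧ 0 ≤ U2 ∧ 0 ≤ U3 ∧ 0 ≤ W1 ∧ 0 ≤ W2 ∧ 0 ≤ W3 ∧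
      w11 = U1 + W1 ∧ x = U2 + W1 ∧ y = U1 + W3 ∧ z = U2 + W3 ∧ x' = U1 + W2 ∧ y' = U3 + W1 ∧
      z' = U3 + W2 := by
  obtain ⟨μ, m1, m2, m3, hμ⟩ : ∃ μ : ℝ, μ ≤ 0 ∧ μ ≤ x - w11 ∧ μ ≤ y' - w11 ∧
      (μ = 0 ∨ μ = x - w11 ∨ μ = y' - w11) := by
    rcases le_total 0 (x - w11) with a | a <;> rcases le_total 0 (y' - w11) with b | b <;>
      rcases le_total (x - w11) (y' - w11) with c | c
    · exact ⟨0, le_rfl, a, b, Or.inl rfl⟩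
    · exact ⟨0, le_rfl, a, b, Or.inl rfl⟩
    · exact ⟨_, b, by linarith, le_rfl, Or.inr (Or.inr rfl)⟩
    · exact ⟨_, b, by linarith, le_rfl, Or.inr (Or.inr rfl)⟩
    · exact ⟨_, a, le_rfl, c, Or.inr (Or.inl rfl)⟩
    · exact ⟨_, a, le_rfl, by linarith, Or.inr (Or.inl rfl)⟩
    · exact ⟨_, a, le_rfl, c, Or.inr (Or.inl rfl)⟩
    · exact ⟨_, b, c, le_rfl, Or.inr (Or.inr rfl)⟩
  refine ⟨0 - μ, x - w11 - μ, y' - w11 - μ, w11 + μ, x' + μ, y + μ, ?_⟩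
  rcases hμ with h | h | h <;> refine ⟨?_, ?_, ?_, ?_, ?_, ?_, ?_, ?_, ?_, ?_, ?_, ?_, ?_⟩ <;>
    linarith

/-- All cyclically ordered triples are positively oriented. -/
def Pos (p : Fin 7 → V3) : Prop := ∀ i j k, i < j → j < k → 0 < br (p i) (p j) (p k)

lemma pos_shift (p : Fin 7 → V3) (hp : Pos p) (c : Fin 7) : Pos (fun i => p (c + i)) := by
  have key : ∀ c i j k : Fin 7, i < j → j < k → (c + i < c + j ∧ c + j < c + k) ∨
      (c + j < c + k ∧ c + k < c + i) ∨ (c + k < c + i ∧ c + i < c + j) := by decide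
  intro i j k h1 h2
  rcases key c i j k h1 h2 with h | h | h
  · exact hp _ _ _ h.1 h.2
  · have := hp _ _ _ h.1 h.2
    rwa [br_rot] at this
  · have := hp _ _ _ h.1 h.2
    rwa [← br_rot] at this

lemma six_middle {ι : Type*} (f : ι → V3) (p : Fin 7 → V3) (hp : Pos p)
    (hf : ∀ i j, 0 ≤ ev (f i) (p j))
    (hB : br (p 1) (p 2) (p 3) * br (p 0) (p 5) (p 6) ≤ br (p 0) (p 1) (p 2) * br (p 3) (p 5) (p 6))
    (hD : br (p 4) (p 5) (p 6) * br (p 0) (p 1) (p 2) ≤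
      br (p 0) (p 5) (p 6) * br (p 1) (p 2) (p 4)) :
    Six (fun i j => ev (f i) (p j)) := by
  have t123 := hp 1 2 3 (by decide) (by decide)
  have t456 := hp 4 5 6 (by decide) (by decide)
  have t023 := hp 0 2 3 (by decide) (by decide)
  have t013 := hp 0 1 3 (by decide) (by decide)
  have t012 := hp 0 1 2 (by decide) (by decide)
  have t056 := hp 0 5 6 (by decide) (by decide)
  have t046 := hp 0 4 6 (by decide) (by decide)
  have t045 := hp 0 4 5 (by decide) (by decide)
  have t356 := hp 3 5 6 (by decide) (by decide)
  have t036 := hp 0 3 6 (by decide) (by decide)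
  have t345 := hp 3 4 5 (by decide) (by decide)
  have t124 := hp 1 2 4 (by decide) (by decide)
  have t014 := hp 0 1 4 (by decide) (by decide)
  have t234 := hp 2 3 4 (by decide) (by decide)
  obtain ⟨l1, hl1⟩ : ∃ l, l = br (p 0) (p 2) (p 3) / br (p 1) (p 2) (p 3) := ⟨_, rfl⟩
  obtain ⟨l2, hl2⟩ : ∃ l, l = br (p 0) (p 1) (p 3) / br (p 1) (p 2) (p 3) := ⟨_, rfl⟩
  obtain ⟨l3, hl3⟩ : ∃ l, l = br (p 0) (p 1) (p 2) / br (p 1) (p 2) (p 3) := ⟨_, rfl⟩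
  obtain ⟨l4, hl4⟩ : ∃ l, l = br (p 0) (p 5) (p 6) / br (p 4) (p 5) (p 6) := ⟨_, rfl⟩
  obtain ⟨l5, hl5⟩ : ∃ l, l = br (p 0) (p 4) (p 6) / br (p 4) (p 5) (p 6) := ⟨_, rfl⟩
  obtain ⟨l6, hl6⟩ : ∃ l, l = br (p 0) (p 4) (p 5) / br (p 4) (p 5) (p 6) := ⟨_, rfl⟩
  have q1 : 0 < l1 := by rw [hl1]; positivity
  have q2 : 0 < l2 := by rw [hl2]; positivity
  have q3 : 0 < l3 := by rw [hl3]; positivity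
  have q4 : 0 < l4 := by rw [hl4]; positivity
  have q5 : 0 < l5 := by rw [hl5]; positivity
  have q6 : 0 < l6 := by rw [hl6]; positivity
  have rows : ∀ i, ∃ U1 U2 U3 W1 W2 W3 : ℝ, 0 ≤ U1 ∧ 0 ≤ U2 ∧ 0 ≤ U3 ∧ 0 ≤ W1 ∧ 0 ≤ W2 ∧
      0 ≤ W3 ∧ ev (f i) (p 0) = U1 + W1 ∧ l3 * ev (f i) (p 3) = U2 + W1 ∧
      l1 * ev (f i) (p 1) = U1 + W3 ∧ l2 * ev (f i) (p 2) = U2 + W3 ∧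
      l6 * ev (f i) (p 6) = U1 + W2 ∧ l4 * ev (f i) (p 4) = U3 + W1 ∧
      l5 * ev (f i) (p 5) = U3 + W2 := by
    intro i
    have g := hf i
    apply row_six
    · have := cramer (f i) (p 0) (p 1) (p 2) (p 3)
      rw [hl1, hl2, hl3]; field_simp; linarith
    · have := cramer (f i) (p 0) (p 4) (p 5) (p 6)
      rw [hl4, hl5, hl6]; field_simp; linarith
    · exact g 0
    · exact mul_nonneg q3.le (g _)
    · exact mul_nonneg q1.le (g _)
    · exact mul_nonneg q2.le (g _)
    · exact mul_nonneg q6.le (g _)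
    · exact mul_nonneg q4.le (g _)
    · exact mul_nonneg q5.le (g _)
    · have c := cramer (f i) (p 0) (p 3) (p 5) (p 6)
      have e1 : 0 ≤ l3 * br (p 3) (p 5) (p 6) - br (p 0) (p 5) (p 6) := by
        rw [hl3, sub_nonneg, div_mul_eq_mul_div, le_div_iff₀ t123]; linarith
      have e2 : 0 ≤ l6 * br (p 3) (p 5) (p 6) - br (p 0) (p 3) (p 5) := by
        rw [hl6, sub_nonneg, div_mul_eq_mul_div, le_div_iff₀ t456]
        have e : br (p 0) (p 4) (p 5) * br (p 3) (p 5) (p 6) =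
          br (p 0) (p 3) (p 5) * br (p 4) (p 5) (p 6) +
          br (p 3) (p 4) (p 5) * br (p 0) (p 5) (p 6) := by unfold br; ring
        have := mul_pos t345 t056
        linarith
      have : 0 ≤ br (p 3) (p 5) (p 6) *
          (l3 * ev (f i) (p 3) + l6 * ev (f i) (p 6) - ev (f i) (p 0)) := by
        have a1 := mul_nonneg e1 (g 3)
        have a2 := mul_nonneg e2 (g 6)
        have a3 := mul_nonneg t036.le (g 5)
        linarith
      exact nonneg_of_mul_nonneg_right this t356
    · have c := cramer (f i) (p 0) (p 1) (p 2) (p 4)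
      have e1 : 0 ≤ l4 * br (p 1) (p 2) (p 4) - br (p 0) (p 1) (p 2) := by
        rw [hl4, sub_nonneg, div_mul_eq_mul_div, le_div_iff₀ t456]; linarith
      have e2 : 0 ≤ l1 * br (p 1) (p 2) (p 4) - br (p 0) (p 2) (p 4) := by
        rw [hl1, sub_nonneg, div_mul_eq_mul_div, le_div_iff₀ t123]
        have e : br (p 0) (p 2) (p 3) * br (p 1) (p 2) (p 4) =
          br (p 0) (p 2) (p 4) * br (p 1) (p 2) (p 3) +
          br (p 2) (p 3) (p 4) * br (p 0) (p 1) (p 2) := by unfold br; ring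
        have := mul_pos t234 t012
        linarith
      have : 0 ≤ br (p 1) (p 2) (p 4) *
          (l1 * ev (f i) (p 1) + l4 * ev (f i) (p 4) - ev (f i) (p 0)) := by
        have a1 := mul_nonneg e1 (g 4)
        have a2 := mul_nonneg e2 (g 1)
        have a3 := mul_nonneg t014.le (g 2)
        linarith
      exact nonneg_of_mul_nonneg_right this t124
  choose U1 U2 U3 W1 W2 W3 n1 n2 n3 n4 n5 n6 r0 r3 r1 r2 r6 r4 r5 using rows
  refine ⟨fun i => ![U1 i, U2 i, U3 i, W1 i, W2 i, W3 i],
    ![![1, l1⁻¹, 0, 0, 0, 0, l6⁻¹], ![0, 0, l2⁻¹, l3⁻¹, 0, 0, 0], ![0, 0, 0, 0, l4⁻¹, l5⁻¹, 0],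
      ![1, 0, 0, l3⁻¹, l4⁻¹, 0, 0], ![0, 0, 0, 0, 0, l5⁻¹, l6⁻¹], ![0, l1⁻¹, l2⁻¹, 0, 0, 0, 0]],
    ?_, ?_, ?_⟩
  · intro i j
    fin_cases j <;> simp [n1, n2, n3, n4, n5, n6]
  · intro i j
    fin_cases i <;> fin_cases j <;> simp [q1.le, q2.le, q3.le, q4.le, q5.le, q6.le]
  · intro i j
    have R0 := r0 i
    have R1 := r1 i
    have R2 := r2 i
    have R3 := r3 i
    have R4 := r4 i
    have R5 := r5 i
    have R6 := r6 i
    fin_cases j <;> simp [Fin.sum_univ_succ] <;> (try field_simp) <;> linarith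

lemma prod_shift (g : Fin 7 → ℝ) (c : Fin 7) : ∏ k, g (k + c) = ∏ k, g k :=
  Equiv.prod_comp (Equiv.addRight c) g

lemma arith (T a b : ℝ) (hT : 0 < T) (ha : 0 < a) (hb : 0 < b) (h1 : T * b < a * a)
    (h2 : T * a < b * b) : T < b := by
  by_contra h
  push Not at h
  have h3 : b * b ≤ T * b := mul_le_mul_of_nonneg_right h hb.le
  have h4 : a < b := lt_of_mul_lt_mul_left (by linarith : T * a < T * b) hT.le
  have h5 : a * a < b * b := mul_lt_mul'' h4 h4 ha.le ha.le
  linarith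

set_option maxHeartbeats 1000000 in
lemma exists_middle (p : Fin 7 → V3) (hp : Pos p) : ∃ k : Fin 7,
    br (p (k+1)) (p (k+2)) (p (k+3)) * br (p (k+0)) (p (k+5)) (p (k+6)) ≤
      br (p (k+0)) (p (k+1)) (p (k+2)) * br (p (k+3)) (p (k+5)) (p (k+6)) ∧
    br (p (k+4)) (p (k+5)) (p (k+6)) * br (p (k+0)) (p (k+1)) (p (k+2)) ≤
      br (p (k+0)) (p (k+5)) (p (k+6)) * br (p (k+1)) (p (k+2)) (p (k+4)) := by
  by_contra hcon
  push Not at hcon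
  obtain ⟨t, ht⟩ : ∃ t : Fin 7 → ℝ, t = fun k => br (p k) (p (k+1)) (p (k+2)) := ⟨_, rfl⟩
  obtain ⟨a, ha⟩ : ∃ t : Fin 7 → ℝ, t = fun k => br (p k) (p (k+1)) (p (k+3)) := ⟨_, rfl⟩
  obtain ⟨b, hb⟩ : ∃ t : Fin 7 → ℝ, t = fun k => br (p k) (p (k+2)) (p (k+3)) := ⟨_, rfl⟩
  have tp : ∀ k, 0 < t k := fun k => by
    have := pos_shift p hp k 0 1 2 (by decide) (by decide)
    simpa [ht] using this
  have ap : ∀ k, 0 < a k := fun k => by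
    have := pos_shift p hp k 0 1 3 (by decide) (by decide)
    simpa [ha] using this
  have bp : ∀ k, 0 < b k := fun k => by
    have := pos_shift p hp k 0 2 3 (by decide) (by decide)
    simpa [hb] using this
  have br_rot2 : ∀ x y z : V3, br z x y = br x y z := fun x y z => by unfold br; ring
  have b1 : ∀ k, b (k+1) = br (p (k+1)) (p (k+3)) (p (k+4)) := fun k => by
    rw [hb]; simp only [add_assoc]; rfl
  have a1 : ∀ k, a (k+1) = br (p (k+1)) (p (k+2)) (p (k+4)) := fun k => by
    rw [ha]; simp only [add_assoc]; rfl
  have t1 : ∀ k, t (k+1) = br (p (k+1)) (p (k+2)) (p (k+3)) := fun k => by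
    rw [ht]; simp only [add_assoc]; rfl
  have t2 : ∀ k, t (k+2) = br (p (k+2)) (p (k+3)) (p (k+4)) := fun k => by
    rw [ht]; simp only [add_assoc]; rfl
  have t3 : ∀ k, t (k+3) = br (p (k+3)) (p (k+4)) (p (k+5)) := fun k => by
    rw [ht]; simp only [add_assoc]; rfl
  have t4 : ∀ k, t (k+4) = br (p (k+4)) (p (k+5)) (p (k+6)) := fun k => by
    rw [ht]; simp only [add_assoc]; rfl
  have t5 : ∀ k, t (k+5) = br (p (k+0)) (p (k+5)) (p (k+6)) := fun k => by
    rw [← br_rot, ht]; simp only [add_assoc]; rfl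
  have a4 : ∀ k, a (k+4) = br (p k) (p (k+4)) (p (k+5)) := fun k => by
    have : k + 4 + 3 = k := by rw [add_assoc]; exact add_zero k
    rw [← br_rot, ha]; simp only [this]; simp only [add_assoc]; rfl
  have b3 : ∀ k, b (k+3) = br (p (k+3)) (p (k+5)) (p (k+6)) := fun k => by
    rw [hb]; simp only [add_assoc]; rfl
  have t0 : ∀ k, t k = br (p k) (p (k+1)) (p (k+2)) := fun k => by rw [ht]
  have a0 : ∀ k, a k = br (p k) (p (k+1)) (p (k+3)) := fun k => by rw [ha]
  have b0 : ∀ k, b k = br (p k) (p (k+2)) (p (k+3)) := fun k => by rw [hb]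
  -- general inequalities
  have hab : ∀ k, t k * b (k+1) < a k * a (k+1) := fun k => by
    have h1 := pos_shift p hp k 0 1 4 (by decide) (by decide)
    have h2 := pos_shift p hp k 1 2 3 (by decide) (by decide)
    have h3 := mul_pos h1 h2
    simp only [add_zero] at h3
    rw [t0, b1, a0, a1]
    have e : br (p k) (p (k+1)) (p (k+3)) * br (p (k+1)) (p (k+2)) (p (k+4)) =
      br (p k) (p (k+1)) (p (k+2)) * br (p (k+1)) (p (k+3)) (p (k+4)) +
      br (p k) (p (k+1)) (p (k+4)) * br (p (k+1)) (p (k+2)) (p (k+3)) := by unfold br; ring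
    linarith
  have hba : ∀ k, t (k+2) * a k < b k * b (k+1) := fun k => by
    have h1 := pos_shift p hp k 0 3 4 (by decide) (by decide)
    have h2 := pos_shift p hp k 1 2 3 (by decide) (by decide)
    have h3 := mul_pos h1 h2
    simp only [add_zero] at h3
    rw [t2, b1, a0, b0]
    have e : br (p k) (p (k+2)) (p (k+3)) * br (p (k+1)) (p (k+3)) (p (k+4)) =
      br (p (k+2)) (p (k+3)) (p (k+4)) * br (p k) (p (k+1)) (p (k+3)) +
      br (p k) (p (k+3)) (p (k+4)) * br (p (k+1)) (p (k+2)) (p (k+3)) := by unfold br; ring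
    linarith
  have hmix : ∀ k, t (k+5) * t (k+3) < b (k+3) * a (k+4) := fun k => by
    have h1 := pos_shift p hp k 4 5 6 (by decide) (by decide)
    have h2 := pos_shift p hp k 0 3 5 (by decide) (by decide)
    have h3 := mul_pos h1 h2
    rw [t5, t3, b3, a4]
    simp only [add_zero] at h3 ⊢
    have e : br (p (k+3)) (p (k+5)) (p (k+6)) * br (p k) (p (k+4)) (p (k+5)) =
      br (p k) (p (k+5)) (p (k+6)) * br (p (k+3)) (p (k+4)) (p (k+5)) +
      br (p (k+4)) (p (k+5)) (p (k+6)) * br (p k) (p (k+3)) (p (k+5)) := by unfold br; ring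
    linarith
  have hLR : ∀ k, t k * b (k+3) < t (k+1) * t (k+5) ∨ t (k+5) * a (k+1) < t (k+4) * t k := by
    intro k
    by_contra hc
    push Not at hc
    have hk := hcon k
    rw [← t1, ← t5, ← b3, ← t4, ← a1, add_zero, ← t0] at hk
    exact absurd (hk hc.1) (not_lt.mpr hc.2)
  have hexcl : ∀ k, t k * b (k+3) < t (k+1) * t (k+5) →
      ¬ (t (k+3+5) * a (k+3+1) < t (k+3+4) * t (k+3)) := by
    intro k h1 h2
    have e1 : k + 3 + 5 = k + 1 := by rw [add_assoc]; rfl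
    have e2 : k + 3 + 1 = k + 4 := by rw [add_assoc]; rfl
    have e3 : k + 3 + 4 = k := by rw [add_assoc]; exact add_zero k
    rw [e1, e2, e3] at h2
    have h3 := mul_lt_mul'' h1 h2 (mul_pos (tp _) (bp _)).le (mul_pos (tp _) (ap _)).le
    have h4 := mul_lt_mul_of_pos_left (hmix k) (mul_pos (tp k) (tp (k+1)))
    linarith
  have Pt : 0 < ∏ k, t k := Finset.prod_pos fun k _ => tp k
  have Pa : 0 < ∏ k, a k := Finset.prod_pos fun k _ => ap k
  have Pb : 0 < ∏ k, b k := Finset.prod_pos fun k _ => bp k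
  have PA : (∏ k, t k) * (∏ k, b k) < (∏ k, a k) * (∏ k, a k) := by
    have := Finset.prod_lt_prod_of_nonempty (s := Finset.univ)
      (fun k _ => mul_pos (tp k) (bp (k+1))) (fun k _ => hab k) Finset.univ_nonempty
    simp only [Finset.prod_mul_distrib, prod_shift] at this
    exact this
  have PB : (∏ k, t k) * (∏ k, a k) < (∏ k, b k) * (∏ k, b k) := by
    have := Finset.prod_lt_prod_of_nonempty (s := Finset.univ)
      (fun k _ => mul_pos (tp (k+2)) (ap k)) (fun k _ => hba k) Finset.univ_nonempty
    simp only [Finset.prod_mul_distrib, prod_shift] at this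
    exact this
  by_cases hL : ∃ k, t k * b (k+3) < t (k+1) * t (k+5)
  · obtain ⟨k, hk⟩ := hL
    have step : ∀ k, t k * b (k+3) < t (k+1) * t (k+5) →
        t (k+3) * b (k+3+3) < t (k+3+1) * t (k+3+5) := fun k h =>
      (hLR (k+3)).resolve_right (hexcl k h)
    have all : ∀ j, t j * b (j+3) < t (j+1) * t (j+5) := by
      have s1 := step _ hk
      have s2 := step _ s1
      have s3 := step _ s2
      have s4 := step _ s3
      have s5 := step _ s4
      have s6 := step _ s5
      have cov : ∀ k j : Fin 7, j = k ∨ j = k+3 ∨ j = k+3+3 ∨ j = k+3+3+3 ∨ j = k+3+3+3+3 ∨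
        j = k+3+3+3+3+3 ∨ j = k+3+3+3+3+3+3 := by decide
      intro j
      rcases cov k j with h | h | h | h | h | h | h <;> rw [h] <;> assumption
    have := Finset.prod_lt_prod_of_nonempty (s := Finset.univ)
      (fun k _ => mul_pos (tp k) (bp (k+3))) (fun k _ => all k) Finset.univ_nonempty
    simp only [Finset.prod_mul_distrib, prod_shift] at this
    have hbt := lt_of_mul_lt_mul_left this Pt.le
    exact absurd (arith _ _ _ Pt Pa Pb PA PB) hbt.not_gt
  · have all : ∀ k, t (k+5) * a (k+1) < t (k+4) * t k := fun k =>
      (hLR k).resolve_left (fun h => hL ⟨k, h⟩)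
    have := Finset.prod_lt_prod_of_nonempty (s := Finset.univ)
      (fun k _ => mul_pos (tp (k+5)) (ap (k+1))) (fun k _ => all k) Finset.univ_nonempty
    simp only [Finset.prod_mul_distrib, prod_shift] at this
    rw [mul_comm] at this
    have hat := lt_of_mul_lt_mul_right this Pt.le
    exact absurd (arith _ _ _ Pt Pb Pa PB PA) hat.not_gt

lemma six_of_pos {ι : Type*} (f : ι → V3) (p : Fin 7 → V3) (hp : Pos p)
    (hf : ∀ i j, 0 ≤ ev (f i) (p j)) : Six (fun i j => ev (f i) (p j)) := by
  obtain ⟨k, h1, h2⟩ := exists_middle p hp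
  apply six_reindex _ (Equiv.addLeft k)
  exact six_middle f (fun i => p (k + i)) (pos_shift p hp k) (fun i j => hf _ _) h1 h2

lemma exists_sort {α : Type*} [Fintype α] (n : ℕ) (hc : Fintype.card α = n) (r : α → α → Prop)
    (irr : ∀ a, ¬ r a a) (tr : ∀ a b c, r a b → r b c → r a c) (tot : ∀ a b, a ≠ b → r a b ∨ r b a) :
    ∃ e : Fin n ≃ α, ∀ i j, i < j → r (e i) (e j) := by
  classical
  have : IsStrictTotalOrder α r :=
    { irrefl := irr
      trans := tr
      trichotomous := fun a b h1 h2 => by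
        by_contra h
        rcases tot a b h with h | h <;> contradiction }
  let _ := linearOrderOfSTO r
  let e := (Fintype.orderIsoFinOfCardEq α hc)
  refine ⟨e.toEquiv, fun i j h => ?_⟩
  exact e.lt_iff_lt.mpr h

/-- no vector is in the cone of three others -/
def NC (p : Fin 7 → V3) : Prop := ∀ i j k l, i ≠ j → i ≠ k → i ≠ l → ∀ s t u : ℝ, 0 ≤ s → 0 ≤ t →
  0 ≤ u → p i ≠ s • p j + t • p k + u • p l

lemma nc_false (p : Fin 7 → V3) (h : NC p) (i j k l : Fin 7) (hj : i ≠ j) (hk : i ≠ k) (hl : i ≠ l)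
    (w s t u : ℝ) (hw : 0 < w) (hs : 0 ≤ s) (ht : 0 ≤ t) (hu : 0 ≤ u)
    (e : w • p i = s • p j + t • p k + u • p l) : False := by
  apply h i j k l hj hk hl (s / w) (t / w) (u / w) (by positivity) (by positivity) (by positivity)
  ext c
  have := congrFun e c
  simp only [Pi.add_apply, Pi.smul_apply, smul_eq_mul] at this ⊢
  field_simp
  linarith

lemma br_ne_zero (p : Fin 7 → V3) (h : NC p) (g : V3) (hg : ∀ j, 0 < ev g (p j)) (i j k : Fin 7)
    (hij : i ≠ j) (hik : i ≠ k) (hjk : j ≠ k) : br (p i) (p j) (p k) ≠ 0 := by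
  intro h0
  have hd : (Matrix.of ![p i, p j, p k]).det = 0 := by
    rw [Matrix.det_fin_three]
    simp
    unfold br at h0
    linarith
  obtain ⟨v, hv, hv0⟩ := Matrix.exists_vecMul_eq_zero_iff.mpr hd
  have rel : ∀ c, v 0 * p i c + v 1 * p j c + v 2 * p k c = 0 := by
    intro c
    have := congrFun hv0 c
    simpa [Matrix.vecMul, dotProduct, Fin.sum_univ_three] using this
  obtain ⟨x, hx⟩ : ∃ x, x = v 0 := ⟨_, rfl⟩
  obtain ⟨y, hy⟩ : ∃ x, x = v 1 := ⟨_, rfl⟩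
  obtain ⟨z, hz⟩ : ∃ x, x = v 2 := ⟨_, rfl⟩
  have hne : ¬ (x = 0 ∧ y = 0 ∧ z = 0) := by
    rintro ⟨h1, h2, h3⟩
    apply hv
    ext c
    fin_cases c
    · simpa [h1] using hx.symm
    · simpa [h2] using hy.symm
    · simpa [h3] using hz.symm
  rw [← hx, ← hy, ← hz] at rel
  clear hx hy hz hv hv0 hd h0
  -- positivity version
  have key : ∀ x y z : ℝ, (∀ c, x * p i c + y * p j c + z * p k c = 0) → 0 < x → False := by
    intro x y z rel hx
    have hgs : x * ev g (p i) + y * ev g (p j) + z * ev g (p k) = 0 := by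
      have r0 := rel 0
      have r1 := rel 1
      have r2 := rel 2
      unfold ev
      linear_combination g 0 * r0 + g 1 * r1 + g 2 * r2
    have gi := mul_pos hx (hg i)
    rcases le_or_gt y 0 with hy | hy <;> rcases le_or_gt z 0 with hz | hz
    · refine nc_false p h i j k k hij hik hik x (-y) (-z) 0 hx (by linarith) (by linarith) le_rfl ?_
      ext c
      simp
      linarith [rel c]
    · have hy' : y < 0 := by
        rcases hy.lt_or_eq with h | h
        · exact h
        · rw [h] at hgs
          have := mul_pos hz (hg k)
          linarith
      refine nc_false p h j i k k hij.symm hjk hjk (-y) x z 0 (by linarith) hx.le hz.le le_rfl ?_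
      ext c
      simp
      linarith [rel c]
    · have hz' : z < 0 := by
        rcases hz.lt_or_eq with h | h
        · exact h
        · rw [h] at hgs
          have := mul_pos hy (hg j)
          linarith
      refine nc_false p h k i j j hik.symm hjk.symm hjk.symm (-z) x y 0 (by linarith) hx.le hy.le
        le_rfl ?_
      ext c
      simp
      linarith [rel c]
    · have := mul_pos hy (hg j)
      have := mul_pos hz (hg k)
      linarith
  rcases lt_trichotomy x 0 with hx | hx | hx
  · exact key (-x) (-y) (-z) (fun c => by linarith [rel c]) (by linarith)
  · subst hx
    have hgs : y * ev g (p j) + z * ev g (p k) = 0 := by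
      have r0 := rel 0
      have r1 := rel 1
      have r2 := rel 2
      unfold ev
      linear_combination g 0 * r0 + g 1 * r1 + g 2 * r2
    rcases lt_trichotomy y 0 with hy | hy | hy
    · have : 0 ≤ z := by
        by_contra hz
        push Not at hz
        nlinarith [hg j, hg k]
      refine nc_false p h j k k k hjk hjk hjk (-y) z 0 0 (by linarith) this le_rfl le_rfl ?_
      ext c
      simp
      linarith [rel c]
    · subst hy
      apply hne
      refine ⟨rfl, rfl, ?_⟩
      have := (hg k).ne'
      simpa [this] using hgs
    · have : z ≤ 0 := by
        by_contra hz
        push Not at hz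
        nlinarith [hg j, hg k]
      refine nc_false p h j k k k hjk hjk hjk y (-z) 0 0 hy (by linarith) le_rfl le_rfl ?_
      ext c
      simp
      linarith [rel c]
  · exact key x y z rel hx

lemma exists_order (p : Fin 7 → V3) (h : NC p) (g : V3) (hg : ∀ j, 0 < ev g (p j)) :
    ∃ e : Fin 7 ≃ Fin 7, Pos (fun i => p (e i)) := by
  have cr : ∀ a b c d : V3, br b c d • a = br a c d • b - br a b d • c + br a b c • d := by
    intro a b c d
    ext x
    fin_cases x <;> simp [br] <;> ring
  have nz := br_ne_zero p h g hg
  have asym : ∀ a b c : V3, br a c b = - br a b c := by intro a b c; unfold br; ring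
  obtain ⟨e, he⟩ := exists_sort (α := Fin 6) 6 (by simp)
    (fun a b => 0 < br (p 0) (p a.succ) (p b.succ))
    (fun a => by simp [br]; ring_nf; simp)
    (fun a b c hab hbc => by
      by_contra hac
      have hab' : a ≠ b := by
        rintro rfl
        have := asym (p 0) (p a.succ) (p a.succ)
        linarith
      have hbc' : b ≠ c := by
        rintro rfl
        have := asym (p 0) (p b.succ) (p b.succ)
        linarith
      have hac' : a ≠ c := by
        rintro rfl
        have := asym (p 0) (p a.succ) (p b.succ)
        linarith
      push Not at hac
      have h0 := nz a.succ b.succ c.succ (by simpa using hab') (by simpa using hac')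
        (by simpa using hbc')
      have hc0 := cr (p 0) (p a.succ) (p b.succ) (p c.succ)
      rcases lt_or_gt_of_ne h0 with hn | hn
      · have hgs : br (p a.succ) (p b.succ) (p c.succ) * ev g (p 0) =
          br (p 0) (p b.succ) (p c.succ) * ev g (p a.succ) -
          br (p 0) (p a.succ) (p c.succ) * ev g (p b.succ) +
          br (p 0) (p a.succ) (p b.succ) * ev g (p c.succ) := cramer _ _ _ _ _
        have := mul_pos hbc (hg a.succ)
        have := mul_pos hab (hg c.succ)
        have := mul_nonneg (neg_nonneg.mpr hac) (hg b.succ).le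
        have := mul_pos (neg_pos.mpr hn) (hg 0)
        linarith
      · refine nc_false p h 0 a.succ b.succ c.succ (Fin.succ_ne_zero _).symm
          (Fin.succ_ne_zero _).symm (Fin.succ_ne_zero _).symm _ _
          (- br (p 0) (p a.succ) (p c.succ)) _ hn hbc.le (by linarith) hab.le ?_
        rw [hc0]; module)
    (fun a b hab => by
      have h0 := nz 0 a.succ b.succ (Fin.succ_ne_zero _).symm (Fin.succ_ne_zero _).symm
        (by simpa using hab)
      rw [asym (p 0) (p a.succ) (p b.succ)]
      rcases lt_or_gt_of_ne h0 with hn | hn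
      · right; linarith
      · left; exact hn)
  let e' : Fin 7 → Fin 7 := Fin.cons 0 (fun i => (e i).succ)
  have inj : Function.Injective e' := by
    rw [Fin.cons_injective_iff]
    refine ⟨?_, fun a b hab => ?_⟩
    · rintro ⟨a, ha⟩
      exact Fin.succ_ne_zero _ ha
    · exact e.injective (Fin.succ_injective _ hab)
  refine ⟨Equiv.ofBijective e' (Finite.injective_iff_bijective.mp inj), ?_⟩
  intro i j k hij hjk
  simp only [Equiv.ofBijective_apply]
  obtain ⟨j, rfl⟩ := Fin.exists_succ_eq.mpr (Fin.ne_zero_of_lt hij)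
  obtain ⟨k, rfl⟩ := Fin.exists_succ_eq.mpr (Fin.ne_zero_of_lt hjk)
  have hjk' : j < k := by simpa using hjk
  rcases Fin.eq_zero_or_eq_succ i with rfl | ⟨i, rfl⟩
  · exact he j k hjk'
  · have hij' : i < j := by simpa using hij
    simp only [e', Fin.cons_succ]
    have ne1 : e i ≠ e j := fun h => hij'.ne (e.injective h)
    have ne2 : e j ≠ e k := fun h => hjk'.ne (e.injective h)
    have ne3 : e i ≠ e k := fun h => (hij'.trans hjk').ne (e.injective h)
    have h1 := he i j hij'
    have h2 := he j k hjk'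
    have h3 := he i k (hij'.trans hjk')
    by_contra hneg
    push Not at hneg
    have hc0 := cr (p 0) (p (e i).succ) (p (e j).succ) (p (e k).succ)
    refine nc_false p h (e j).succ 0 (e i).succ (e k).succ (Fin.succ_ne_zero _)
      (by simpa using ne1.symm) (by simpa using ne2) _ _ _ _ h3 (neg_nonneg.mpr hneg) h2.le h1.le ?_
    rw [neg_smul, hc0]; module

lemma six_of_points {ι : Type*} [Fintype ι] (f : ι → V3) (p : Fin 7 → V3)
    (hf : ∀ i j, 0 ≤ ev (f i) (p j)) : Six (fun i j => ev (f i) (p j)) := by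
  by_cases hz : ∃ j, ∀ i, ev (f i) (p j) = 0
  · obtain ⟨j, hj⟩ := hz
    have hne : ∀ j : Fin 7, j ≠ j + 1 := by decide
    have hne := hne j
    apply six_of_comb _ hf j (j+1) (j+1) (j+1) hne hne hne 0 0 0 le_rfl le_rfl le_rfl
    intro r
    simp [hj r]
  push Not at hz
  by_cases hnc : NC p
  · have hg : ∀ j, 0 < ev (∑ i, f i) (p j) := by
      intro j
      have e : ev (∑ i, f i) (p j) = ∑ i, ev (f i) (p j) := by
        simp [ev, Finset.sum_add_distrib, Finset.sum_mul]
      rw [e]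
      obtain ⟨i, hi⟩ := hz j
      exact Finset.sum_pos' (fun i _ => hf i j) ⟨i, Finset.mem_univ _, (hf i j).lt_of_ne hi.symm⟩
    obtain ⟨e, he⟩ := exists_order p hnc _ hg
    apply six_reindex _ e
    exact six_of_pos f (fun i => p (e i)) he (fun i j => hf _ _)
  · unfold NC at hnc
    push Not at hnc
    obtain ⟨i, j, k, l, hj, hk, hl, s, t, u, hs, ht, hu, e⟩ := hnc
    apply six_of_comb _ hf i j k l hj hk hl s t u hs ht hu
    intro r
    rw [e]
    simp [ev]
    ring

lemma rank_factor (m n : ℕ) (A : Matrix (Fin m) (Fin n) ℝ) (hrank : A.rank = 3) :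
    ∃ (f : Fin m → V3) (p : Fin n → V3), ∀ i j, A i j = ev (f i) (p j) := by
  have b : Module.Basis (Fin 3) ℝ (LinearMap.range A.mulVecLin) :=
    Module.finBasisOfFinrankEq ℝ _ hrank
  have hc : ∀ j, A.col j ∈ LinearMap.range A.mulVecLin := fun j =>
    ⟨Pi.single j 1, by simp⟩
  refine ⟨fun i c => (b c : Fin m → ℝ) i, fun j => b.repr ⟨A.col j, hc j⟩, fun i j => ?_⟩
  have h := b.sum_repr ⟨A.col j, hc j⟩
  have h2 := congrArg (fun v : LinearMap.range A.mulVecLin => (v : Fin m → ℝ) i) h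
  rw [Fin.sum_univ_three] at h2
  have h3 : b.repr ⟨A.col j, hc j⟩ 0 * (b 0 : Fin m → ℝ) i +
    b.repr ⟨A.col j, hc j⟩ 1 * (b 1 : Fin m → ℝ) i +
    b.repr ⟨A.col j, hc j⟩ 2 * (b 2 : Fin m → ℝ) i = A i j := h2
  unfold ev
  linarith

end NNRank

theorem nonneg_rank_lt_of_rank_three (m n : ℕ) (hn : 7 ≤ n)
    (A : Matrix (Fin m) (Fin n) ℝ)
    (hA : ∀ i j, 0 ≤ A i j) (hrank : A.rank = 3) :
    ∃ k : ℕ, k < n ∧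
      ∃ (B : Matrix (Fin m) (Fin k) ℝ) (C : Matrix (Fin k) (Fin n) ℝ),
        (∀ i j, 0 ≤ B i j) ∧ (∀ i j, 0 ≤ C i j) ∧ A = B * C := by
  obtain ⟨d, rfl⟩ := Nat.exists_eq_add_of_le hn
  obtain ⟨f, p, hfp⟩ := NNRank.rank_factor m _ A hrank
  obtain ⟨G, C, hG, hC, h⟩ := NNRank.six_of_points f (fun j : Fin 7 => p (Fin.castAdd d j))
    (fun i j => by rw [← hfp]; exact hA _ _)
  refine ⟨6 + d, by omega,
    Matrix.of fun i => Fin.append (G i) (fun j => A i (Fin.natAdd 7 j)),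
    Matrix.of (Fin.append (fun l => Fin.append (C l) (fun _ => 0))
      (fun l => Fin.append (fun _ => 0) (fun j => if l = j then 1 else 0))), ?_, ?_, ?_⟩
  · intro i j
    refine Fin.addCases (fun j => ?_) (fun j => ?_) j
    · simp [hG]
    · simp [hA]
  · intro i j
    refine Fin.addCases (fun i => ?_) (fun i => ?_) i <;>
      refine Fin.addCases (fun j => ?_) (fun j => ?_) j
    · simp [hC]
    · simp
    · simp
    · simp only [Matrix.of_apply, Fin.append_right]
      split_ifs <;> norm_num
  · ext i j
    rw [Matrix.mul_apply, Fin.sum_univ_add]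
    refine Fin.addCases (fun j => ?_) (fun j => ?_) j
    · simp [hfp, h i j]
    · simp
end

section
/- For every k ∈ {3, 4, 5, 6} there exists a k×k real matrix with all entries nonnegative whose classical rank equals 3 and whose nonnegative rank equals k (i.e., it admits no factorization A = B·C with B a nonnegative k×(k−1) matrix and C a nonnegative (k−1)×k matrix). -/
theorem rank_three_of_cert {k : ℕ} (A : Matrix (Fin k) (Fin k) ℝ)
    (P : Matrix (Fin k) (Fin 3) ℝ) (Q : Matrix (Fin 3) (Fin k) ℝ)
    (L : Matrix (Fin 3) (Fin k) ℝ) (R : Matrix (Fin k) (Fin 3) ℝ)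
    (h : A = P * Q) (h' : L * (P * Q) * R = 1) : A.rank = 3 := by
  apply le_antisymm
  · rw [h]
    exact (Matrix.rank_mul_le_left P Q).trans (by simpa using Matrix.rank_le_width P)
  · have h1 : (L * A * R).rank = 3 := by rw [h, h']; simp
    rw [← h1]
    exact (Matrix.rank_mul_le_left _ _).trans (Matrix.rank_mul_le_right _ _)

/-- Bitmask of the support of a row. -/
noncomputable def suppMask {n : ℕ} (v : Fin n → ℝ) : ℕ :=
  open Classical in Nat.ofBits fun l => decide (v l ≠ 0)

theorem suppMask_lt {n : ℕ} (v : Fin n → ℝ) : suppMask v < 2 ^ n := Nat.ofBits_lt_two_pow _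

theorem testBit_suppMask {n : ℕ} (v : Fin n → ℝ) (l : Fin n) :
    (suppMask v).testBit l = true ↔ v l ≠ 0 := by
  simp [suppMask, Nat.testBit_ofBits_lt]

/-- `a` is not a submask of `u`. -/
def nsub (a u : ℕ) : Bool := !(Nat.beq (Nat.land a u) a)

theorem nsub_of {n : ℕ} {p q : Fin n → ℝ} (l : Fin n) (hp : p l ≠ 0) (hq : q l = 0) :
    nsub (suppMask p) (suppMask q) = true := by
  by_contra h
  have h1 : suppMask p &&& suppMask q = suppMask p := by
    have := h
    simp only [nsub, Bool.not_eq_true, Bool.not_eq_false'] at this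
    exact Nat.eq_of_beq_eq_true this
  have h2 := (testBit_suppMask p l).2 hp
  rw [← h1, Nat.testBit_and, Bool.and_eq_true, testBit_suppMask q] at h2
  exact h2.2 hq

theorem nsub_or_of {n : ℕ} {p q r : Fin n → ℝ} (l : Fin n) (hp : p l ≠ 0) (hq : q l = 0)
    (hr : r l = 0) : nsub (suppMask p) (Nat.lor (suppMask q) (suppMask r)) = true := by
  by_contra h
  have h1 : suppMask p &&& (suppMask q ||| suppMask r) = suppMask p := by
    have := h
    simp only [nsub, Bool.not_eq_true, Bool.not_eq_false'] at this
    exact Nat.eq_of_beq_eq_true this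
  have h2 := (testBit_suppMask p l).2 hp
  rw [← h1, Nat.testBit_and, Nat.testBit_or, Bool.and_eq_true, Bool.or_eq_true,
    testBit_suppMask q, testBit_suppMask r] at h2
  rcases h2.2 with h | h
  · exact h hq
  · exact h hr

/-- Bounded universal quantification, as a Boolean. -/
def allB (n : ℕ) (p : ℕ → Bool) : Bool :=
  Nat.rec true (fun i r => cond (p i) r false) n

theorem allB_spec {n : ℕ} {p : ℕ → Bool} (h : allB n p = true) : ∀ i < n, p i = true := by
  induction n with
  | zero => intro i hi; omega
  | succ n ih =>
    have h' : cond (p n) (allB n p) false = true := h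
    rw [Bool.cond_eq_ite] at h'
    split_ifs at h' with hp
    intro i hi
    rcases Nat.lt_succ_iff_lt_or_eq.1 hi with h1 | rfl
    · exact ih h' i h1
    · exact hp

theorem cond_spec {a b : Bool} (h : cond a b true = true) (ha : a = true) : b = true := by
  rw [ha] at h; exact h

theorem and_tt {a b : Bool} (ha : a = true) (hb : b = true) : (a && b) = true := by
  rw [ha, hb]; rfl

section general
variable {k n : ℕ} {A : Matrix (Fin k) (Fin k) ℝ} {B : Matrix (Fin k) (Fin n) ℝ}
  {C : Matrix (Fin n) (Fin k) ℝ}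

theorem zero_of (hB : ∀ i j, 0 ≤ B i j) (hC : ∀ i j, 0 ≤ C i j) (h : A = B * C)
    {i j : Fin k} (hA : A i j = 0) (l : Fin n) : B i l * C l j = 0 := by
  rw [h, Matrix.mul_apply,
    Finset.sum_eq_zero_iff_of_nonneg (fun l _ => mul_nonneg (hB i l) (hC l j))] at hA
  exact hA l (Finset.mem_univ l)

theorem cover (hB : ∀ i j, 0 ≤ B i j) (hC : ∀ i j, 0 ≤ C i j) (h : A = B * C)
    (q i i' j : Fin k) (hA : A q j ≠ 0) (h1 : A i j = 0) (h2 : A i' j = 0) :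
    nsub (suppMask (B q)) (Nat.lor (suppMask (B i)) (suppMask (B i'))) = true := by
  have : ∃ l, B q l * C l j ≠ 0 := by
    by_contra! hh
    apply hA
    rw [h, Matrix.mul_apply]
    exact Finset.sum_eq_zero fun l _ => hh l
  obtain ⟨l, hl⟩ := this
  have hc : C l j ≠ 0 := right_ne_zero_of_mul hl
  exact nsub_or_of l (left_ne_zero_of_mul hl)
    ((mul_eq_zero.1 (zero_of hB hC h h1 l)).resolve_right hc)
    ((mul_eq_zero.1 (zero_of hB hC h h2 l)).resolve_right hc)

theorem cover' (hB : ∀ i j, 0 ≤ B i j) (hC : ∀ i j, 0 ≤ C i j) (h : A = B * C)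
    (q i j : Fin k) (hA : A q j ≠ 0) (h1 : A i j = 0) :
    nsub (suppMask (B q)) (suppMask (B i)) = true := by
  have : Nat.lor (suppMask (B i)) (suppMask (B i)) = suppMask (B i) := Nat.or_self _
  simpa only [this] using cover hB hC h q i i j hA h1 h1
end general

/-- The shape forced on a cover of the hexagon pattern by five rectangles. -/
def Shape (a b c d e f : ℕ) : Prop :=
  ∃ o x y p : Fin 5, o ≠ x ∧ o ≠ y ∧ p ≠ x ∧
    (∀ l : Fin 5, a.testBit l = true → l = o ∨ l = x) ∧
    (∀ l : Fin 5, b.testBit l = true → l = o ∨ l = y) ∧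
    (∀ l : Fin 5, f.testBit l = true → l = p ∨ l = x) ∧
    f.testBit x = true ∧ c.testBit o = true ∧ d.testBit p = true ∧ e.testBit y = true

/-- Bounded existential quantification, as a Boolean. -/
def anyB (n : ℕ) (p : ℕ → Bool) : Bool :=
  Nat.rec false (fun i r => cond (p i) true r) n

theorem anyB_spec {n : ℕ} {p : ℕ → Bool} (h : anyB n p = true) : ∃ i : Fin n, p i = true := by
  induction n with
  | zero => exact absurd h Bool.false_ne_true
  | succ n ih =>
    have h' : cond (p n) true (anyB n p) = true := h
    rw [Bool.cond_eq_ite] at h'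
    split_ifs at h' with hp
    · exact ⟨Fin.last n, hp⟩
    · obtain ⟨i, hi⟩ := ih h'
      exact ⟨i.castSucc, hi⟩

/-- Boolean test for `Shape`. -/
def shapeB (a b c d e f : ℕ) : Bool :=
  anyB 5 fun o => cond (Nat.testBit c o) (
  anyB 5 fun x => cond (!(Nat.beq o x) && (Nat.beq a (2 ^ o ||| 2 ^ x) && Nat.testBit f x)) (
  anyB 5 fun y => cond (!(Nat.beq o y) && (Nat.beq b (2 ^ o ||| 2 ^ y) && Nat.testBit e y)) (
  anyB 5 fun p => !(Nat.beq p x) && (Nat.beq f (2 ^ p ||| 2 ^ x) && Nat.testBit d p))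
  false) false) false

theorem cond_false_spec {a b : Bool} (h : cond a b false = true) : a = true ∧ b = true := by
  cases a
  · exact absurd h Bool.false_ne_true
  · exact ⟨rfl, h⟩

theorem bits_of {a o x : ℕ} (h : Nat.beq a (2 ^ o ||| 2 ^ x) = true) (l : ℕ)
    (hl : a.testBit l = true) : l = o ∨ l = x := by
  rw [Nat.eq_of_beq_eq_true h, Nat.testBit_or, Bool.or_eq_true, Nat.testBit_two_pow,
    Nat.testBit_two_pow, decide_eq_true_iff, decide_eq_true_iff] at hl
  rcases hl with hl | hl
  · exact Or.inl hl.symm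
  · exact Or.inr hl.symm

theorem ne_of_beq {m : ℕ} {o x : Fin m} (h : (!(Nat.beq o x)) = true) : o ≠ x := by
  rintro rfl
  simp at h

theorem shapeB_spec {a b c d e f : ℕ} (h : shapeB a b c d e f = true) : Shape a b c d e f := by
  obtain ⟨o, ho⟩ := anyB_spec h
  obtain ⟨hc, ho⟩ := cond_false_spec ho
  obtain ⟨x, hx⟩ := anyB_spec ho
  obtain ⟨hx1, hx⟩ := cond_false_spec hx
  obtain ⟨y, hy⟩ := anyB_spec hx
  obtain ⟨hy1, hy⟩ := cond_false_spec hy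
  obtain ⟨p, hp⟩ := anyB_spec hy
  rw [Bool.and_eq_true, Bool.and_eq_true] at hx1 hy1 hp
  refine ⟨o, x, y, p, ne_of_beq hx1.1, ne_of_beq hy1.1, ne_of_beq hp.1, ?_, ?_, ?_,
    hx1.2.2, hc, hp.2.2, hy1.2.2⟩
  · intro l hl
    simpa only [Fin.ext_iff] using bits_of hx1.2.1 l hl
  · intro l hl
    simpa only [Fin.ext_iff] using bits_of hy1.2.1 l hl
  · intro l hl
    simpa only [Fin.ext_iff] using bits_of hp.2.1 l hl

/-- The shape up to rotation. -/
def shapesB (a b c d e f : ℕ) : Bool :=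
  cond (shapeB a b c d e f) true (cond (shapeB b c d e f a) true (shapeB c d e f a b))

theorem shapesB_spec {a b c d e f : ℕ} (h : shapesB a b c d e f = true) :
    Shape a b c d e f ∨ Shape b c d e f a ∨ Shape c d e f a b := by
  unfold shapesB at h
  rw [Bool.cond_eq_ite, Bool.cond_eq_ite] at h
  split_ifs at h with h1 h2
  · exact Or.inl (shapeB_spec h1)
  · exact Or.inr (Or.inl (shapeB_spec h2))
  · exact Or.inr (Or.inr (shapeB_spec h))

/-- Search over all supports. -/
def search4 : Bool :=
  allB 8 fun a =>
  allB 8 fun b =>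
  cond (nsub b a && (
      nsub a b)) (
  allB 8 fun c =>
  cond (nsub c (Nat.lor a b) && (
      nsub a (Nat.lor b c) && (
      nsub b c))) (
  allB 8 fun d =>
  cond (nsub d (Nat.lor a b) && (
      nsub d (Nat.lor b c) && (
      nsub a (Nat.lor c d) && (
      nsub b (Nat.lor c d) && (
      nsub b (Nat.lor d a) && (
      nsub c (Nat.lor d a))))))) (
  false) true) true) true

set_option maxRecDepth 100000 in
theorem search4_true : search4 = true := by
  decide +kernel

/-- Slack matrix of a 4-gon. -/
def N4 : Matrix (Fin 4) (Fin 4) ℕ :=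
  !![0, 1, 1, 0; 0, 0, 1, 1; 1, 0, 0, 1; 1, 1, 0, 0]

/-- Slack matrix of a 4-gon, over the reals. -/
def M4 : Matrix (Fin 4) (Fin 4) ℝ := fun i j => (N4 i j : ℝ)

theorem M4_zero {i j : Fin 4} (h : N4 i j = 0) : M4 i j = 0 := by
  simp [M4, h]

theorem M4_ne {i j : Fin 4} (h : N4 i j ≠ 0) : M4 i j ≠ 0 := by
  simpa [M4] using h

theorem M4_rank : M4.rank = 3 := by
  refine rank_three_of_cert M4
    !![1, 0, 0; 1, 1, 0; 1, 1, 1; 1, 0, 1]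
    !![0, 1, 1, 0; 0, -1, 0, 1; 1, 0, -1, 0]
    !![1, 0, 0, 0; 0, 1, 0, 0; 0, 0, 1, 0]
    !![0, 0, 1; 1, -1, 0; 0, 1, 0; 0, 0, 0] ?_ ?_
  · ext i j
    fin_cases i <;> fin_cases j <;> norm_num [M4, N4, Matrix.mul_apply, Fin.sum_univ_succ]
  · ext i j
    fin_cases i <;> fin_cases j <;> norm_num [M4, N4, Matrix.mul_apply, Fin.sum_univ_succ]

theorem M4_nonneg : ∀ i j, 0 ≤ M4 i j := by
  intro i j
  exact Nat.cast_nonneg _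

theorem M4_no (B : Matrix (Fin 4) (Fin 3) ℝ) (C : Matrix (Fin 3) (Fin 4) ℝ)
    (hB : ∀ i j, 0 ≤ B i j) (hC : ∀ i j, 0 ≤ C i j) (h : M4 = B * C) : False := by
  have c1 := fun q i j h1 h2 => cover' hB hC h q i j (M4_ne h1) (M4_zero h2)
  have c2 := fun q i i' j h1 h2 h3 =>
    cover hB hC h q i i' j (M4_ne h1) (M4_zero h2) (M4_zero h3)
  exact Bool.false_ne_true <| cond_spec (allB_spec (cond_spec (allB_spec (cond_spec (allB_spec (allB_spec (search4_true)
    _ (suppMask_lt (B 0)))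
    _ (suppMask_lt (B 1)))
    (and_tt (c1 1 0 3 (by decide) (by decide)) <|
    c1 0 1 1 (by decide) (by decide)))
    _ (suppMask_lt (B 2)))
    (and_tt (c2 2 0 1 0 (by decide) (by decide) (by decide)) <|
    and_tt (c2 0 1 2 1 (by decide) (by decide) (by decide)) <|
    c1 1 2 2 (by decide) (by decide)))
    _ (suppMask_lt (B 3)))
    (and_tt (c2 3 0 1 0 (by decide) (by decide) (by decide)) <|
    and_tt (c2 3 1 2 1 (by decide) (by decide) (by decide)) <|
    and_tt (c2 0 2 3 2 (by decide) (by decide) (by decide)) <|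
    and_tt (c2 1 2 3 2 (by decide) (by decide) (by decide)) <|
    and_tt (c2 1 3 0 3 (by decide) (by decide) (by decide)) <|
    c2 2 3 0 3 (by decide) (by decide) (by decide))

/-- Search over all supports. -/
def search5 : Bool :=
  allB 16 fun a =>
  allB 16 fun b =>
  cond (nsub b a && (
      nsub a b)) (
  allB 16 fun c =>
  cond (nsub c (Nat.lor a b) && (
      nsub a (Nat.lor b c) && (
      nsub b c))) (
  allB 16 fun d =>
  cond (nsub d (Nat.lor a b) && (
      nsub d (Nat.lor b c) && (
      nsub a (Nat.lor c d) && (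
      nsub b (Nat.lor c d) && (
      nsub c d))))) (
  allB 16 fun e =>
  cond (nsub e (Nat.lor a b) && (
      nsub e (Nat.lor b c) && (
      nsub e (Nat.lor c d) && (
      nsub a (Nat.lor d e) && (
      nsub b (Nat.lor d e) && (
      nsub c (Nat.lor d e) && (
      nsub b (Nat.lor e a) && (
      nsub c (Nat.lor e a) && (
      nsub d (Nat.lor e a)))))))))) (
  false) true) true) true) true

set_option maxRecDepth 100000 in
theorem search5_true : search5 = true := by
  decide +kernel

/-- Slack matrix of a 5-gon. -/
def N5 : Matrix (Fin 5) (Fin 5) ℕ :=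
  !![0, 1, 3, 1, 0; 0, 0, 2, 2, 1; 1, 0, 0, 2, 2; 2, 2, 0, 0, 1; 1, 2, 2, 0, 0]

/-- Slack matrix of a 5-gon, over the reals. -/
def M5 : Matrix (Fin 5) (Fin 5) ℝ := fun i j => (N5 i j : ℝ)

theorem M5_zero {i j : Fin 5} (h : N5 i j = 0) : M5 i j = 0 := by
  simp [M5, h]

theorem M5_ne {i j : Fin 5} (h : N5 i j ≠ 0) : M5 i j ≠ 0 := by
  simpa [M5] using h

theorem M5_rank : M5.rank = 3 := by
  refine rank_three_of_cert M5
    !![1, 0, 0; 1, 1, 0; 1, 2, 1; 1, 1, 2; 1, 0, 1]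
    !![0, 1, 3, 1, 0; 0, -1, -1, 1, 1; 1, 1, -1, -1, 0]
    !![1, 0, 0, 0, 0; 0, 1, 0, 0, 0; 0, 0, 1, 0, 0]
    !![0, 0, 1; 1, -3/2, 0; 0, 1/2, 0; 0, 0, 0; 0, 0, 0] ?_ ?_
  · ext i j
    fin_cases i <;> fin_cases j <;> norm_num [M5, N5, Matrix.mul_apply, Fin.sum_univ_succ]
  · ext i j
    fin_cases i <;> fin_cases j <;> norm_num [M5, N5, Matrix.mul_apply, Fin.sum_univ_succ]

theorem M5_nonneg : ∀ i j, 0 ≤ M5 i j := by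
  intro i j
  exact Nat.cast_nonneg _

theorem M5_no (B : Matrix (Fin 5) (Fin 4) ℝ) (C : Matrix (Fin 4) (Fin 5) ℝ)
    (hB : ∀ i j, 0 ≤ B i j) (hC : ∀ i j, 0 ≤ C i j) (h : M5 = B * C) : False := by
  have c1 := fun q i j h1 h2 => cover' hB hC h q i j (M5_ne h1) (M5_zero h2)
  have c2 := fun q i i' j h1 h2 h3 =>
    cover hB hC h q i i' j (M5_ne h1) (M5_zero h2) (M5_zero h3)
  exact Bool.false_ne_true <| cond_spec (allB_spec (cond_spec (allB_spec (cond_spec (allB_spec (cond_spec (allB_spec (allB_spec (search5_true)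
    _ (suppMask_lt (B 0)))
    _ (suppMask_lt (B 1)))
    (and_tt (c1 1 0 4 (by decide) (by decide)) <|
    c1 0 1 1 (by decide) (by decide)))
    _ (suppMask_lt (B 2)))
    (and_tt (c2 2 0 1 0 (by decide) (by decide) (by decide)) <|
    and_tt (c2 0 1 2 1 (by decide) (by decide) (by decide)) <|
    c1 1 2 2 (by decide) (by decide)))
    _ (suppMask_lt (B 3)))
    (and_tt (c2 3 0 1 0 (by decide) (by decide) (by decide)) <|
    and_tt (c2 3 1 2 1 (by decide) (by decide) (by decide)) <|
    and_tt (c2 0 2 3 2 (by decide) (by decide) (by decide)) <|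
    and_tt (c2 1 2 3 2 (by decide) (by decide) (by decide)) <|
    c1 2 3 3 (by decide) (by decide)))
    _ (suppMask_lt (B 4)))
    (and_tt (c2 4 0 1 0 (by decide) (by decide) (by decide)) <|
    and_tt (c2 4 1 2 1 (by decide) (by decide) (by decide)) <|
    and_tt (c2 4 2 3 2 (by decide) (by decide) (by decide)) <|
    and_tt (c2 0 3 4 3 (by decide) (by decide) (by decide)) <|
    and_tt (c2 1 3 4 3 (by decide) (by decide) (by decide)) <|
    and_tt (c2 2 3 4 3 (by decide) (by decide) (by decide)) <|
    and_tt (c2 1 4 0 4 (by decide) (by decide) (by decide)) <|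
    and_tt (c2 2 4 0 4 (by decide) (by decide) (by decide)) <|
    c2 3 4 0 4 (by decide) (by decide) (by decide))

/-- Search over all supports. -/
def search6 : Bool :=
  allB 32 fun a =>
  allB 32 fun b =>
  cond (nsub b a && (
      nsub a b)) (
  allB 32 fun c =>
  cond (nsub c (Nat.lor a b) && (
      nsub a (Nat.lor b c) && (
      nsub b c))) (
  allB 32 fun d =>
  cond (nsub d (Nat.lor a b) && (
      nsub d (Nat.lor b c) && (
      nsub a (Nat.lor c d) && (
      nsub b (Nat.lor c d) && (
      nsub c d))))) (
  allB 32 fun e =>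
  cond (nsub e (Nat.lor a b) && (
      nsub e (Nat.lor b c) && (
      nsub e (Nat.lor c d) && (
      nsub a (Nat.lor d e) && (
      nsub b (Nat.lor d e) && (
      nsub c (Nat.lor d e) && (
      nsub d e))))))) (
  allB 32 fun f =>
  cond (nsub f (Nat.lor a b) && (
      nsub f (Nat.lor b c) && (
      nsub f (Nat.lor c d) && (
      nsub f (Nat.lor d e) && (
      nsub a (Nat.lor e f) && (
      nsub b (Nat.lor e f) && (
      nsub c (Nat.lor e f) && (
      nsub d (Nat.lor e f) && (
      nsub b (Nat.lor f a) && (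
      nsub c (Nat.lor f a) && (
      nsub d (Nat.lor f a) && (
      nsub e (Nat.lor f a))))))))))))) (
  shapesB a b c d e f) true) true) true) true) true

set_option maxRecDepth 100000 in
theorem search6_true : search6 = true := by
  decide +kernel

/-- Slack matrix of a 6-gon. -/
def N6 : Matrix (Fin 6) (Fin 6) ℕ :=
  !![0, 2, 3, 7, 1, 0; 0, 0, 1, 5, 5, 2; 2, 0, 0, 2, 6, 3; 4, 1, 0, 0, 5, 3; 6, 4, 2, 0, 0, 1; 2, 3, 3, 5, 0, 0]

/-- Slack matrix of a 6-gon, over the reals. -/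
def M6 : Matrix (Fin 6) (Fin 6) ℝ := fun i j => (N6 i j : ℝ)

theorem M6_zero {i j : Fin 6} (h : N6 i j = 0) : M6 i j = 0 := by
  simp [M6, h]

theorem M6_ne {i j : Fin 6} (h : N6 i j ≠ 0) : M6 i j ≠ 0 := by
  simpa [M6] using h

theorem M6_rank : M6.rank = 3 := by
  refine rank_three_of_cert M6
    !![1, 0, 0; 1, 2, 0; 1, 3, 1; 1, 3, 2; 1, 1, 3; 1, 0, 1]
    !![0, 2, 3, 7, 1, 0; 0, -1, -1, -1, 2, 1; 2, 1, 0, -2, -1, 0]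
    !![1, 0, 0, 0, 0, 0; 0, 1, 0, 0, 0, 0; 0, 0, 1, 0, 0, 0]
    !![0, 0, 1/2; 1/2, -3/2, 0; 0, 1, 0; 0, 0, 0; 0, 0, 0; 0, 0, 0] ?_ ?_
  · ext i j
    fin_cases i <;> fin_cases j <;> norm_num [M6, N6, Matrix.mul_apply, Fin.sum_univ_succ]
  · ext i j
    fin_cases i <;> fin_cases j <;> norm_num [M6, N6, Matrix.mul_apply, Fin.sum_univ_succ]

theorem shape_identity {A : Matrix (Fin 6) (Fin 6) ℝ} {B : Matrix (Fin 6) (Fin 5) ℝ}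
    {C : Matrix (Fin 5) (Fin 6) ℝ} (hB : ∀ i j, 0 ≤ B i j) (hC : ∀ i j, 0 ≤ C i j)
    (h : A = B * C) (i1 i2 i3 i4 i5 i6 j3 j4 j5 : Fin 6)
    (z33 : A i3 j3 = 0) (z43 : A i4 j3 = 0) (z44 : A i4 j4 = 0) (z54 : A i5 j4 = 0)
    (z55 : A i5 j5 = 0) (z65 : A i6 j5 = 0)
    (hs : Shape (suppMask (B i1)) (suppMask (B i2)) (suppMask (B i3)) (suppMask (B i4))
      (suppMask (B i5)) (suppMask (B i6))) :
    A i2 j5 * A i1 j4 * A i6 j3 = A i2 j5 * A i1 j3 * A i6 j4 + A i2 j4 * A i1 j5 * A i6 j3 := by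
  obtain ⟨o, x, y, p, hox, hoy, hpx, ha, hb, hf, h6x, h3o, h4p, h5y⟩ := hs
  simp only [testBit_suppMask] at ha hb hf h6x h3o h4p h5y
  have key : ∀ (i : Fin 6) (u w : Fin 5) (j : Fin 6), u ≠ w →
      (∀ l, B i l ≠ 0 → l = u ∨ l = w) → A i j = B i u * C u j + B i w * C w j := by
    intro i u w j huw hh
    rw [h, Matrix.mul_apply]
    refine Fintype.sum_eq_add u w huw fun l hl => ?_
    have : B i l = 0 := by
      by_contra hne
      rcases hh l hne with h1 | h1
      · exact hl.1 h1
      · exact hl.2 h1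
    rw [this, zero_mul]
  have zz : ∀ {i j : Fin 6} (l : Fin 5), B i l ≠ 0 → A i j = 0 → C l j = 0 :=
    fun l hl hA => (mul_eq_zero.1 (zero_of hB hC h hA l)).resolve_left hl
  have o3 := zz o h3o z33
  have p3 := zz p h4p z43
  have p4 := zz p h4p z44
  have y4 := zz y h5y z54
  have y5 := zz y h5y z55
  have x5 := zz x h6x z65
  rw [key i2 o y j5 hoy hb, key i2 o y j4 hoy hb, key i1 o x j3 hox ha, key i1 o x j4 hox ha,
    key i1 o x j5 hox ha, key i6 p x j3 hpx hf, key i6 p x j4 hpx hf, o3, p3, p4, y4, y5, x5]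
  ring

theorem M6_nonneg : ∀ i j, 0 ≤ M6 i j := by
  intro i j
  exact Nat.cast_nonneg _

theorem M6_no (B : Matrix (Fin 6) (Fin 5) ℝ) (C : Matrix (Fin 5) (Fin 6) ℝ)
    (hB : ∀ i j, 0 ≤ B i j) (hC : ∀ i j, 0 ≤ C i j) (h : M6 = B * C) : False := by
  have c1 := fun q i j h1 h2 => cover' hB hC h q i j (M6_ne h1) (M6_zero h2)
  have c2 := fun q i i' j h1 h2 h3 =>
    cover hB hC h q i i' j (M6_ne h1) (M6_zero h2) (M6_zero h3)
  have H := shapesB_spec <| cond_spec (allB_spec (cond_spec (allB_spec (cond_spec (allB_spec (cond_spec (allB_spec (cond_spec (allB_spec (allB_spec (search6_true)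
    _ (suppMask_lt (B 0)))
    _ (suppMask_lt (B 1)))
    (and_tt (c1 1 0 5 (by decide) (by decide)) <|
    c1 0 1 1 (by decide) (by decide)))
    _ (suppMask_lt (B 2)))
    (and_tt (c2 2 0 1 0 (by decide) (by decide) (by decide)) <|
    and_tt (c2 0 1 2 1 (by decide) (by decide) (by decide)) <|
    c1 1 2 2 (by decide) (by decide)))
    _ (suppMask_lt (B 3)))
    (and_tt (c2 3 0 1 0 (by decide) (by decide) (by decide)) <|
    and_tt (c2 3 1 2 1 (by decide) (by decide) (by decide)) <|
    and_tt (c2 0 2 3 2 (by decide) (by decide) (by decide)) <|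
    and_tt (c2 1 2 3 2 (by decide) (by decide) (by decide)) <|
    c1 2 3 3 (by decide) (by decide)))
    _ (suppMask_lt (B 4)))
    (and_tt (c2 4 0 1 0 (by decide) (by decide) (by decide)) <|
    and_tt (c2 4 1 2 1 (by decide) (by decide) (by decide)) <|
    and_tt (c2 4 2 3 2 (by decide) (by decide) (by decide)) <|
    and_tt (c2 0 3 4 3 (by decide) (by decide) (by decide)) <|
    and_tt (c2 1 3 4 3 (by decide) (by decide) (by decide)) <|
    and_tt (c2 2 3 4 3 (by decide) (by decide) (by decide)) <|
    c1 3 4 4 (by decide) (by decide)))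
    _ (suppMask_lt (B 5)))
    (and_tt (c2 5 0 1 0 (by decide) (by decide) (by decide)) <|
    and_tt (c2 5 1 2 1 (by decide) (by decide) (by decide)) <|
    and_tt (c2 5 2 3 2 (by decide) (by decide) (by decide)) <|
    and_tt (c2 5 3 4 3 (by decide) (by decide) (by decide)) <|
    and_tt (c2 0 4 5 4 (by decide) (by decide) (by decide)) <|
    and_tt (c2 1 4 5 4 (by decide) (by decide) (by decide)) <|
    and_tt (c2 2 4 5 4 (by decide) (by decide) (by decide)) <|
    and_tt (c2 3 4 5 4 (by decide) (by decide) (by decide)) <|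
    and_tt (c2 1 5 0 5 (by decide) (by decide) (by decide)) <|
    and_tt (c2 2 5 0 5 (by decide) (by decide) (by decide)) <|
    and_tt (c2 3 5 0 5 (by decide) (by decide) (by decide)) <|
    c2 4 5 0 5 (by decide) (by decide) (by decide))
  rcases H with H | H | H
  · have := shape_identity hB hC h 0 1 2 3 4 5 2 3 4
      (M6_zero (by decide)) (M6_zero (by decide)) (M6_zero (by decide)) (M6_zero (by decide)) (M6_zero (by decide)) (M6_zero (by decide)) H
    simp only [M6] at this
    norm_cast at this
  · have := shape_identity hB hC h 1 2 3 4 5 0 3 4 5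
      (M6_zero (by decide)) (M6_zero (by decide)) (M6_zero (by decide)) (M6_zero (by decide)) (M6_zero (by decide)) (M6_zero (by decide)) H
    simp only [M6] at this
    norm_cast at this
  · have := shape_identity hB hC h 2 3 4 5 0 1 4 5 0
      (M6_zero (by decide)) (M6_zero (by decide)) (M6_zero (by decide)) (M6_zero (by decide)) (M6_zero (by decide)) (M6_zero (by decide)) H
    simp only [M6] at this
    norm_cast at this

theorem M3_no (B : Matrix (Fin 3) (Fin 2) ℝ) (C : Matrix (Fin 2) (Fin 3) ℝ)
    (h : (1 : Matrix (Fin 3) (Fin 3) ℝ) = B * C) : False := by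
  have h1 : (B * C).rank = 3 := by rw [← h]; simp
  have h2 := (Matrix.rank_mul_le_left B C).trans (Matrix.rank_le_width B)
  omega

/-- For each `k ∈ {3,4,5,6}` there is a nonnegative k×k real matrix of
classical rank 3 whose nonnegative rank equals `k`, i.e. it admits no nonnegative
factorization through `k - 1`. -/
theorem exists_rank_three_full_nonneg_rank :
    ∀ k ∈ ({3, 4, 5, 6} : Set ℕ),
      ∃ A : Matrix (Fin k) (Fin k) ℝ,
        (∀ i j, 0 ≤ A i j) ∧ A.rank = 3 ∧
        ¬ ∃ (B : Matrix (Fin k) (Fin (k - 1)) ℝ) (C : Matrix (Fin (k - 1)) (Fin k) ℝ),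
            (∀ i j, 0 ≤ B i j) ∧ (∀ i j, 0 ≤ C i j) ∧ A = B * C := by
  intro k hk
  simp only [Set.mem_insert_iff, Set.mem_singleton_iff] at hk
  rcases hk with rfl | rfl | rfl | rfl
  · refine ⟨1, ?_, by simp, ?_⟩
    · intro i j
      rw [Matrix.one_apply]
      split_ifs <;> norm_num
    · rintro ⟨B, C, -, -, h⟩
      exact M3_no B C h
  · refine ⟨M4, M4_nonneg, M4_rank, ?_⟩
    rintro ⟨B, C, hB, hC, h⟩
    exact M4_no B C hB hC h
  · refine ⟨M5, M5_nonneg, M5_rank, ?_⟩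
    rintro ⟨B, C, hB, hC, h⟩
    exact M5_no B C hB hC h
  · refine ⟨M6, M6_nonneg, M6_rank, ?_⟩
    rintro ⟨B, C, hB, hC, h⟩
    exact M6_no B C hB hC h
end

section
/- Let U be a 7×7 real matrix of classical rank 3, with rows and columns indexed by ℤ/7ℤ, such that U_{ij} = 0 whenever i ∈ {j−1, j} (indices mod 7) and U_{ij} > 0 otherwise. Then U has nonnegative rank strictly less than 7; that is, there exist a 7×6 matrix B and a 6×7 matrix C, both with all entries nonnegative, such that U = B·C. -/
def DD (x y z : ZMod 7 → ℝ) (i j k : ZMod 7) : ℝ :=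
  x i * (y j * z k - y k * z j) - x j * (y i * z k - y k * z i) + x k * (y i * z j - y j * z i)

lemma exists_factor (U : Matrix (ZMod 7) (ZMod 7) ℝ) (hrank : U.rank = 3) :
    ∃ p q r x y z : ZMod 7 → ℝ, ∀ i j, U i j = p i * x j + q i * y j + r i * z j := by
  let b := Module.finBasisOfFinrankEq ℝ (LinearMap.range U.mulVecLin) hrank
  let w : ZMod 7 → LinearMap.range U.mulVecLin := fun j => ⟨U.col j, ⟨Pi.single j 1, by simp⟩⟩
  refine ⟨fun i => (b 0).1 i, fun i => (b 1).1 i, fun i => (b 2).1 i,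
    fun j => b.repr (w j) 0, fun j => b.repr (w j) 1, fun j => b.repr (w j) 2, fun i j => ?_⟩
  have h := congrArg (fun v => (v : LinearMap.range U.mulVecLin).1 i) (b.sum_repr (w j))
  simp only [Fin.sum_univ_three, Submodule.coe_add, Submodule.coe_smul, Pi.add_apply, Pi.smul_apply, smul_eq_mul] at h
  have h2 : (w j).1 i = U i j := rfl
  rw [← h2, ← h]; ring

lemma construct (U : Matrix (ZMod 7) (ZMod 7) ℝ)
    (hzero : ∀ i j : ZMod 7, (i = j - 1 ∨ i = j) → U i j = 0)
    (hpos : ∀ i j : ZMod 7, ¬(i = j - 1 ∨ i = j) → 0 < U i j)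
    (l1 l2 l3 l4 l5 l6 : ℝ) (p1 : 0 < l1) (p2 : 0 < l2) (p3 : 0 < l3) (p4 : 0 < l4)
    (p5 : 0 < l5) (p6 : 0 < l6)
    (e1 : ∀ i, U i 0 = l1 * U i 1 - l2 * U i 2 + l3 * U i 3)
    (e2 : ∀ i, U i 0 = l4 * U i 4 - l5 * U i 5 + l6 * U i 6)
    (h1 : U 1 0 ≤ l4 * U 1 4) (h2 : U 4 0 ≤ l1 * U 4 1)
    (h3 : U 5 0 ≤ l3 * U 5 3) (h4 : U 2 0 ≤ l6 * U 2 6) :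
    ∃ (B : Matrix (ZMod 7) (Fin 6) ℝ) (C : Matrix (Fin 6) (ZMod 7) ℝ),
      (∀ i j, 0 ≤ B i j) ∧ (∀ i j, 0 ≤ C i j) ∧ U = B * C := by
  have nn : ∀ i j, 0 ≤ U i j := fun i j => by
    by_cases h : i = j - 1 ∨ i = j
    · exact (hzero i j h).ge
    · exact (hpos i j h).le
  have q1 : ∀ i, 0 ≤ l1 * U i 1 + l4 * U i 4 - U i 0 := by
    intro i
    have a1 := mul_nonneg p1.le (nn i 1)
    have a2 := mul_nonneg p2.le (nn i 2)
    have a4 := mul_nonneg p4.le (nn i 4)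
    have a5 := mul_nonneg p5.le (nn i 5)
    have g1 := e1 i
    have g2 := e2 i
    fin_cases i
    · have : U 0 0 = 0 := hzero _ _ (by decide)
      change 0 ≤ l1 * U 0 1 + l4 * U 0 4 - U 0 0
      change 0 ≤ l1 * U 0 1 at a1
      change 0 ≤ l4 * U 0 4 at a4
      linarith
    · change 0 ≤ l1 * U 1 1 + l4 * U 1 4 - U 1 0
      change 0 ≤ l1 * U 1 1 at a1
      linarith
    · have : U 2 3 = 0 := hzero _ _ (by decide)
      change U 2 0 = l1 * U 2 1 - l2 * U 2 2 + l3 * U 2 3 at g1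
      change 0 ≤ l1 * U 2 1 + l4 * U 2 4 - U 2 0
      change 0 ≤ l2 * U 2 2 at a2
      change 0 ≤ l4 * U 2 4 at a4
      rw [g1, this]; linarith
    · have : U 3 3 = 0 := hzero _ _ (by decide)
      change U 3 0 = l1 * U 3 1 - l2 * U 3 2 + l3 * U 3 3 at g1
      change 0 ≤ l1 * U 3 1 + l4 * U 3 4 - U 3 0
      change 0 ≤ l2 * U 3 2 at a2
      change 0 ≤ l4 * U 3 4 at a4
      rw [g1, this]; linarith
    · change 0 ≤ l1 * U 4 1 + l4 * U 4 4 - U 4 0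
      change 0 ≤ l4 * U 4 4 at a4
      linarith
    · have : U 5 6 = 0 := hzero _ _ (by decide)
      change U 5 0 = l4 * U 5 4 - l5 * U 5 5 + l6 * U 5 6 at g2
      change 0 ≤ l1 * U 5 1 + l4 * U 5 4 - U 5 0
      change 0 ≤ l1 * U 5 1 at a1
      change 0 ≤ l5 * U 5 5 at a5
      rw [g2, this]; linarith
    · have : U 6 0 = 0 := hzero _ _ (by decide)
      change 0 ≤ l1 * U 6 1 + l4 * U 6 4 - U 6 0
      change 0 ≤ l1 * U 6 1 at a1
      change 0 ≤ l4 * U 6 4 at a4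
      linarith
  have q2 : ∀ i, 0 ≤ l3 * U i 3 + l6 * U i 6 - U i 0 := by
    intro i
    have a1 := mul_nonneg p3.le (nn i 3)
    have a2 := mul_nonneg p2.le (nn i 2)
    have a4 := mul_nonneg p6.le (nn i 6)
    have a5 := mul_nonneg p5.le (nn i 5)
    have g1 := e1 i
    have g2 := e2 i
    fin_cases i
    · have : U 0 0 = 0 := hzero _ _ (by decide)
      change 0 ≤ l3 * U 0 3 + l6 * U 0 6 - U 0 0
      change 0 ≤ l3 * U 0 3 at a1
      change 0 ≤ l6 * U 0 6 at a4
      linarith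
    · have : U 1 1 = 0 := hzero _ _ (by decide)
      change U 1 0 = l1 * U 1 1 - l2 * U 1 2 + l3 * U 1 3 at g1
      change 0 ≤ l3 * U 1 3 + l6 * U 1 6 - U 1 0
      change 0 ≤ l2 * U 1 2 at a2
      change 0 ≤ l6 * U 1 6 at a4
      rw [g1, this]; linarith
    · change 0 ≤ l3 * U 2 3 + l6 * U 2 6 - U 2 0
      change 0 ≤ l3 * U 2 3 at a1
      linarith
    · have : U 3 4 = 0 := hzero _ _ (by decide)
      change U 3 0 = l4 * U 3 4 - l5 * U 3 5 + l6 * U 3 6 at g2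
      change 0 ≤ l3 * U 3 3 + l6 * U 3 6 - U 3 0
      change 0 ≤ l3 * U 3 3 at a1
      change 0 ≤ l5 * U 3 5 at a5
      rw [g2, this]; linarith
    · have : U 4 4 = 0 := hzero _ _ (by decide)
      change U 4 0 = l4 * U 4 4 - l5 * U 4 5 + l6 * U 4 6 at g2
      change 0 ≤ l3 * U 4 3 + l6 * U 4 6 - U 4 0
      change 0 ≤ l3 * U 4 3 at a1
      change 0 ≤ l5 * U 4 5 at a5
      rw [g2, this]; linarith
    · change 0 ≤ l3 * U 5 3 + l6 * U 5 6 - U 5 0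
      change 0 ≤ l6 * U 5 6 at a4
      linarith
    · have : U 6 0 = 0 := hzero _ _ (by decide)
      change 0 ≤ l3 * U 6 3 + l6 * U 6 6 - U 6 0
      change 0 ≤ l3 * U 6 3 at a1
      change 0 ≤ l6 * U 6 6 at a4
      linarith
  let m : ZMod 7 → ℝ := fun i => min 0 (min (l1 * U i 1 - U i 0) (l6 * U i 6 - U i 0))
  have m0 : ∀ i, m i ≤ 0 := fun i => min_le_left _ _
  have m1 : ∀ i, m i ≤ l1 * U i 1 - U i 0 := fun i => (min_le_right _ _).trans (min_le_left _ _)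
  have m2 : ∀ i, m i ≤ l6 * U i 6 - U i 0 := fun i => (min_le_right _ _).trans (min_le_right _ _)
  have mg : ∀ i t, 0 ≤ t → 0 ≤ t + (l1 * U i 1 - U i 0) → 0 ≤ t + (l6 * U i 6 - U i 0) →
      0 ≤ t + m i := by
    intro i t ha hb hc
    have : -t ≤ m i := le_min (by linarith) (le_min (by linarith) (by linarith))
    linarith
  refine ⟨Matrix.of fun i => ![U i 0 + m i, l3 * U i 3 + m i, l4 * U i 4 + m i,
      l1 * U i 1 - U i 0 - m i, 0 - m i, l6 * U i 6 - U i 0 - m i],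
    Matrix.of ![![1, l1⁻¹, 0, 0, 0, 0, l6⁻¹],
      ![0, 0, l2⁻¹, l3⁻¹, 0, 0, 0],
      ![0, 0, 0, 0, l4⁻¹, l5⁻¹, 0],
      ![0, l1⁻¹, l2⁻¹, 0, 0, 0, 0],
      ![1, 0, 0, l3⁻¹, l4⁻¹, 0, 0],
      ![0, 0, 0, 0, 0, l5⁻¹, l6⁻¹]], ?_, ?_, ?_⟩
  · intro i j
    have a1 := mul_nonneg p1.le (nn i 1)
    have a2 := mul_nonneg p2.le (nn i 2)
    have a3 := mul_nonneg p3.le (nn i 3)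
    have a4 := mul_nonneg p4.le (nn i 4)
    have a5 := mul_nonneg p5.le (nn i 5)
    have a6 := mul_nonneg p6.le (nn i 6)
    have a0 := nn i 0
    have g1 := e1 i
    have g2 := e2 i
    have r1 := q1 i
    have r2 := q2 i
    have s0 := m0 i
    have s1 := m1 i
    have s2 := m2 i
    fin_cases j
    · change 0 ≤ U i 0 + m i
      apply mg <;> linarith
    · change 0 ≤ l3 * U i 3 + m i
      apply mg <;> linarith
    · change 0 ≤ l4 * U i 4 + m i
      apply mg <;> linarith
    · change 0 ≤ l1 * U i 1 - U i 0 - m i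
      linarith
    · change 0 ≤ 0 - m i
      linarith
    · change 0 ≤ l6 * U i 6 - U i 0 - m i
      linarith
  · have := inv_nonneg.2 p1.le
    have := inv_nonneg.2 p2.le
    have := inv_nonneg.2 p3.le
    have := inv_nonneg.2 p4.le
    have := inv_nonneg.2 p5.le
    have := inv_nonneg.2 p6.le
    intro i j
    fin_cases i <;> fin_cases j <;> first | exact le_refl (0:ℝ) | exact zero_le_one | assumption
  · ext i j
    have g1 := e1 i
    have g2 := e2 i
    rw [Matrix.mul_apply]
    simp only [Fin.sum_univ_six]
    fin_cases j
    · change U i 0 = (U i 0 + m i) * 1 + (l3 * U i 3 + m i) * 0 + (l4 * U i 4 + m i) * 0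
        + (l1 * U i 1 - U i 0 - m i) * 0 + (0 - m i) * 1 + (l6 * U i 6 - U i 0 - m i) * 0
      ring
    · change U i 1 = (U i 0 + m i) * l1⁻¹ + (l3 * U i 3 + m i) * 0 + (l4 * U i 4 + m i) * 0
        + (l1 * U i 1 - U i 0 - m i) * l1⁻¹ + (0 - m i) * 0 + (l6 * U i 6 - U i 0 - m i) * 0
      field_simp; ring
    · change U i 2 = (U i 0 + m i) * 0 + (l3 * U i 3 + m i) * l2⁻¹ + (l4 * U i 4 + m i) * 0
        + (l1 * U i 1 - U i 0 - m i) * l2⁻¹ + (0 - m i) * 0 + (l6 * U i 6 - U i 0 - m i) * 0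
      field_simp; linarith
    · change U i 3 = (U i 0 + m i) * 0 + (l3 * U i 3 + m i) * l3⁻¹ + (l4 * U i 4 + m i) * 0
        + (l1 * U i 1 - U i 0 - m i) * 0 + (0 - m i) * l3⁻¹ + (l6 * U i 6 - U i 0 - m i) * 0
      field_simp; ring
    · change U i 4 = (U i 0 + m i) * 0 + (l3 * U i 3 + m i) * 0 + (l4 * U i 4 + m i) * l4⁻¹
        + (l1 * U i 1 - U i 0 - m i) * 0 + (0 - m i) * l4⁻¹ + (l6 * U i 6 - U i 0 - m i) * 0
      field_simp; ring
    · change U i 5 = (U i 0 + m i) * 0 + (l3 * U i 3 + m i) * 0 + (l4 * U i 4 + m i) * l5⁻¹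
        + (l1 * U i 1 - U i 0 - m i) * 0 + (0 - m i) * 0 + (l6 * U i 6 - U i 0 - m i) * l5⁻¹
      field_simp; linarith
    · change U i 6 = (U i 0 + m i) * l6⁻¹ + (l3 * U i 3 + m i) * 0 + (l4 * U i 4 + m i) * 0
        + (l1 * U i 1 - U i 0 - m i) * 0 + (0 - m i) * 0 + (l6 * U i 6 - U i 0 - m i) * l6⁻¹
      field_simp; ring

set_option maxRecDepth 4000 in
lemma zmod7_cover : ∀ k j : ZMod 7, j = k ∨ j = k+4 ∨ j = k+4+4 ∨ j = k+4+4+4 ∨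
    j = k+4+4+4+4 ∨ j = k+4+4+4+4+4 ∨ j = k+4+4+4+4+4+4 := by
  decide

set_option maxHeartbeats 1000000 in
lemma comb (x y z : ZMod 7 → ℝ)
    (hD : ∀ i j k, j = i + 1 → k ≠ i → k ≠ j → 0 < DD x y z i j k) :
    ∃ k, DD x y z k (k+1) (k+2) * DD x y z (k+4) (k+5) (k+6) ≤
        DD x y z (k+1) (k+2) (k+4) * DD x y z (k+5) (k+6) k ∧
      DD x y z (k+5) (k+6) k * DD x y z (k+1) (k+2) (k+3) ≤
        DD x y z (k+3) (k+5) (k+6) * DD x y z k (k+1) (k+2) := by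
  set D := DD x y z with hDD
  have rot : ∀ i j k, D i j k = D j k i := by
    intro i j k; simp only [hDD, DD]; ring
  have pl : ∀ p a b c d, D p a c * D p b d = D p a b * D p c d + D p a d * D p b c := by
    intro p a b c d; simp only [hDD, DD]; ring
  have sw : ∀ i j k, D i j k = - D i k j := by
    intro i j k; simp only [hDD, DD]; ring
  by_contra hcon
  push Not at hcon
  let a : ZMod 7 → ℝ := fun k => D k (k+1) (k+2)
  let b : ZMod 7 → ℝ := fun k => D k (k+1) (k+3)
  let c : ZMod 7 → ℝ := fun k => D k (k+2) (k+3)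
  have ha : ∀ k, 0 < a k := fun k =>
    hD _ _ _ (by clear * -; decide +revert) (by clear * -; decide +revert) (by clear * -; decide +revert)
  have hb : ∀ k, 0 < b k := fun k =>
    hD _ _ _ (by clear * -; decide +revert) (by clear * -; decide +revert) (by clear * -; decide +revert)
  have hc : ∀ k, 0 < c k := fun k => by
    change 0 < D _ _ _
    rw [rot]
    exact hD _ _ _ (by clear * -; decide +revert) (by clear * -; decide +revert) (by clear * -; decide +revert)
  have R1 : ∀ k, a k * c (k+1) < b k * b (k+1) := by
    intro k
    change D k (k+1) (k+2) * D (k+1) (k+1+2) (k+1+3)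
      < D k (k+1) (k+3) * D (k+1) (k+1+1) (k+1+3)
    have z1 : k+1+1 = k+2 := by ring
    have z2 : k+1+2 = k+3 := by ring
    have z3 : k+1+3 = k+4 := by ring
    rw [z1, z2, z3]
    have u1 : 0 < D (k+1) (k+2) (k+3) :=
      hD _ _ _ (by clear * -; decide +revert) (by clear * -; decide +revert) (by clear * -; decide +revert)
    have u2 : 0 < D k (k+1) (k+4) :=
      hD _ _ _ (by clear * -; decide +revert) (by clear * -; decide +revert) (by clear * -; decide +revert)
    have u3 : D k (k+1) (k+3) * D (k+1) (k+2) (k+4) = D k (k+1) (k+2) * D (k+1) (k+3) (k+4)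
       + D k (k+1) (k+4) * D (k+1) (k+2) (k+3) := by simp only [hDD, DD]; ring
    nlinarith [mul_pos u1 u2]
  have R2 : ∀ k, b k * a (k+2) < c k * c (k+1) := by
    intro k
    change D k (k+1) (k+3) * D (k+2) (k+2+1) (k+2+2)
      < D k (k+2) (k+3) * D (k+1) (k+1+2) (k+1+3)
    have z1 : k+2+1 = k+3 := by ring
    have z4 : k+2+2 = k+4 := by ring
    have z2 : k+1+2 = k+3 := by ring
    have z3 : k+1+3 = k+4 := by ring
    rw [z1, z2, z3, z4]
    have u1 : 0 < D (k+1) (k+2) (k+3) :=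
      hD _ _ _ (by clear * -; decide +revert) (by clear * -; decide +revert) (by clear * -; decide +revert)
    have u2 : 0 < D (k+3) (k+4) k :=
      hD _ _ _ (by clear * -; decide +revert) (by clear * -; decide +revert) (by clear * -; decide +revert)
    have u3 : D k (k+2) (k+3) * D (k+1) (k+3) (k+4) = D k (k+1) (k+3) * D (k+2) (k+3) (k+4)
       + D (k+3) (k+4) k * D (k+1) (k+2) (k+3) := by simp only [hDD, DD]; ring
    nlinarith [mul_pos u1 u2]
  have R3 : ∀ k, a k * a (k+2) < c k * b (k+1) := by
    intro k
    change D k (k+1) (k+2) * D (k+2) (k+2+1) (k+2+2)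
      < D k (k+2) (k+3) * D (k+1) (k+1+1) (k+1+3)
    have z1 : k+2+1 = k+3 := by ring
    have z4 : k+2+2 = k+4 := by ring
    have z2 : k+1+1 = k+2 := by ring
    have z3 : k+1+3 = k+4 := by ring
    rw [z1, z2, z3, z4]
    have u1 : 0 < D (k+1) (k+2) (k+3) :=
      hD _ _ _ (by clear * -; decide +revert) (by clear * -; decide +revert) (by clear * -; decide +revert)
    have u2 : 0 < D k (k+2) (k+4) := by
      have v0 : D k (k+2) (k+4) * D k (k+1) (k+3) = D k (k+1) (k+2) * D (k+3) (k+4) k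
        + D k (k+1) (k+4) * D (k+2) (k+3) k := by simp only [hDD, DD]; ring
      have v1 : 0 < D k (k+1) (k+3) :=
        hD _ _ _ (by clear * -; decide +revert) (by clear * -; decide +revert) (by clear * -; decide +revert)
      have v2 : 0 < D k (k+1) (k+2) :=
        hD _ _ _ (by clear * -; decide +revert) (by clear * -; decide +revert) (by clear * -; decide +revert)
      have v3 : 0 < D (k+3) (k+4) k :=
        hD _ _ _ (by clear * -; decide +revert) (by clear * -; decide +revert) (by clear * -; decide +revert)
      have v4 : 0 < D k (k+1) (k+4) :=
        hD _ _ _ (by clear * -; decide +revert) (by clear * -; decide +revert) (by clear * -; decide +revert)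
      have v5 : 0 < D (k+2) (k+3) k :=
        hD _ _ _ (by clear * -; decide +revert) (by clear * -; decide +revert) (by clear * -; decide +revert)
      have v6 : 0 < D k (k+2) (k+4) * D k (k+1) (k+3) := by rw [v0]; positivity
      exact pos_of_mul_pos_left v6 v1.le
    have u3 : D k (k+2) (k+3) * D (k+1) (k+2) (k+4) = D k (k+1) (k+2) * D (k+2) (k+3) (k+4)
       + D k (k+2) (k+4) * D (k+1) (k+2) (k+3) := by simp only [hDD, DD]; ring
    nlinarith [mul_pos u1 u2]
  -- failure of the condition at `k` on either side
  have hAB : ∀ k, b (k+1) * a (k+5) < a k * a (k+4) ∨ c (k+3) * a k < a (k+5) * a (k+1) := by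
    intro k
    have z1 : k+1+1 = k+2 := by ring
    have z2 : k+1+2 = k+3 := by ring
    have z3 : k+1+3 = k+4 := by ring
    have z4 : k+5+1 = k+6 := by ring
    have z5 : k+5+2 = k := by clear * -; decide +revert
    have z6 : k+4+1 = k+5 := by ring
    have z7 : k+4+2 = k+6 := by ring
    have z8 : k+3+2 = k+5 := by ring
    have z9 : k+3+3 = k+6 := by ring
    simp only [a, b, c, z1, z2, z3, z4, z5, z6, z7, z8, z9]
    by_contra! h
    exact absurd h.2 (not_le.2 (hcon k h.1))
  have ex1 : ∀ k, b (k+1) * a (k+5) < a k * a (k+4) → ¬ (c (k+3) * a k < a (k+5) * a (k+1)) := by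
    intro k h1 h2
    -- `a (k+1) * a (k+4) < b (k+1) * c (k+3)`
    have r1 := R1 (k+1)
    have r2 : a (k+4) * b (k+2) < c (k+2) * c (k+3) := by
      have := R2 (k+2)
      rw [show k+2+2 = k+4 by ring, show k+2+1 = k+3 by ring] at this
      linarith
    rw [show k+1+1 = k+2 by ring] at r1
    have s1 : a (k+1) * a (k+4) < b (k+1) * c (k+3) := by
      have := mul_lt_mul'' r1 r2 (mul_pos (ha _) (hc _)).le (mul_pos (ha _) (hb _)).le
      have q := mul_pos (hc (k+2)) (hb (k+2))
      refine lt_of_mul_lt_mul_right (a := c (k+2) * b (k+2)) ?_ q.le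
      nlinarith [this]
    have s2 := mul_lt_mul'' h1 h2 (mul_pos (hb _) (ha _)).le (mul_pos (hc _) (ha _)).le
    have q := mul_pos (ha k) (ha (k+5))
    have s3 : b (k+1) * c (k+3) < a (k+1) * a (k+4) := by
      refine lt_of_mul_lt_mul_right (a := a k * a (k+5)) ?_ q.le
      nlinarith [s2]
    linarith
  have ex2 : ∀ k, b (k+1) * a (k+5) < a k * a (k+4) → b (k+4+1) * a (k+4+5) < a (k+4) * a (k+4+4) := by
    intro k h1
    refine (hAB (k+4)).resolve_right fun h2 => ?_
    rw [show k+4+3 = k by clear * -; decide +revert, show k+4+5 = k+2 by clear * -; decide +revert,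
      show k+4+1 = k+5 by ring] at h2
    have r := R3 k
    have s2 := mul_lt_mul'' h1 h2 (mul_pos (hb _) (ha _)).le (mul_pos (hc _) (ha _)).le
    have q := mul_pos (ha (k+4)) (ha (k+5))
    have s3 : c k * b (k+1) < a k * a (k+2) := by
      refine lt_of_mul_lt_mul_right (a := a (k+4) * a (k+5)) ?_ q.le
      nlinarith [s2]
    linarith
  have sh : ∀ (f : ZMod 7 → ℝ) (t : ZMod 7), ∏ k, f (k+t) = ∏ k, f k := fun f t =>
    Equiv.prod_comp (Equiv.addRight t) f
  have pa : 0 < ∏ k, a k := Finset.prod_pos fun k _ => ha k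
  have pb : 0 < ∏ k, b k := Finset.prod_pos fun k _ => hb k
  have pc : 0 < ∏ k, c k := Finset.prod_pos fun k _ => hc k
  by_cases hall : ∀ k, b (k+1) * a (k+5) < a k * a (k+4)
  · have t1 : ∏ k, (b (k+1) * a (k+5)) < ∏ k, (a k * a (k+4)) :=
      Finset.prod_lt_prod_of_nonempty (fun k _ => mul_pos (hb _) (ha _)) (fun k _ => hall k)
        Finset.univ_nonempty
    have t2 : ∏ k, (a (k+5) * a (k+1)) ≤ ∏ k, (c (k+3) * a k) :=
      Finset.prod_le_prod (fun k _ => (mul_pos (ha _) (ha _)).le)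
        (fun k _ => not_lt.1 (ex1 k (hall k)))
    have t3 : ∏ k, (a k * c (k+1)) < ∏ k, (b k * b (k+1)) :=
      Finset.prod_lt_prod_of_nonempty (fun k _ => mul_pos (ha _) (hc _)) (fun k _ => R1 k)
        Finset.univ_nonempty
    simp only [Finset.prod_mul_distrib, sh] at t1 t2 t3
    have t4 := lt_of_mul_lt_mul_right t1 pa.le
    have t5 := le_of_mul_le_mul_right t2 pa
    nlinarith
  · have hnone : ∀ k, ¬ b (k+1) * a (k+5) < a k * a (k+4) := by
      intro k hk
      apply hall
      have k1 := ex2 _ hk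
      have k2 := ex2 _ k1
      have k3 := ex2 _ k2
      have k4 := ex2 _ k3
      have k5 := ex2 _ k4
      have k6 := ex2 _ k5
      intro j
      have : j = k ∨ j = k+4 ∨ j = k+4+4 ∨ j = k+4+4+4 ∨ j = k+4+4+4+4 ∨ j = k+4+4+4+4+4 ∨
        j = k+4+4+4+4+4+4 := zmod7_cover k j
      rcases this with h | h | h | h | h | h | h
      · rw [h]; exact hk
      · rw [h]; exact k1
      · rw [h]; exact k2
      · rw [h]; exact k3
      · rw [h]; exact k4
      · rw [h]; exact k5
      · rw [h]; exact k6
    have hB : ∀ k, c (k+3) * a k < a (k+5) * a (k+1) := fun k => (hAB k).resolve_left (hnone k)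
    have t1 : ∏ k, (c (k+3) * a k) < ∏ k, (a (k+5) * a (k+1)) :=
      Finset.prod_lt_prod_of_nonempty (fun k _ => mul_pos (hc _) (ha _)) (fun k _ => hB k)
        Finset.univ_nonempty
    have t2 : ∏ k, (a k * a (k+4)) ≤ ∏ k, (b (k+1) * a (k+5)) :=
      Finset.prod_le_prod (fun k _ => (mul_pos (ha _) (ha _)).le)
        (fun k _ => not_lt.1 (hnone k))
    have t3 : ∏ k, (b k * a (k+2)) < ∏ k, (c k * c (k+1)) :=
      Finset.prod_lt_prod_of_nonempty (fun k _ => mul_pos (hb _) (ha _)) (fun k _ => R2 k)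
        Finset.univ_nonempty
    simp only [Finset.prod_mul_distrib, sh] at t1 t2 t3
    have t4 := lt_of_mul_lt_mul_right t1 pa.le
    have t5 := le_of_mul_le_mul_right t2 pa
    nlinarith

lemma main_zero (U : Matrix (ZMod 7) (ZMod 7) ℝ)
    (hzero : ∀ i j : ZMod 7, (i = j - 1 ∨ i = j) → U i j = 0)
    (hpos : ∀ i j : ZMod 7, ¬(i = j - 1 ∨ i = j) → 0 < U i j)
    (x y z c : ZMod 7 → ℝ) (hc : ∀ i, 0 < c i)
    (hU : ∀ i j, U i j = c i * DD x y z i (i+1) j)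
    (hD : ∀ i j k, j = i + 1 → k ≠ i → k ≠ j → 0 < DD x y z i j k)
    (hA : DD x y z 0 1 2 * DD x y z 4 5 6 ≤ DD x y z 1 2 4 * DD x y z 5 6 0)
    (hB : DD x y z 5 6 0 * DD x y z 1 2 3 ≤ DD x y z 3 5 6 * DD x y z 0 1 2) :
    ∃ (B : Matrix (ZMod 7) (Fin 6) ℝ) (C : Matrix (Fin 6) (ZMod 7) ℝ),
      (∀ i j, 0 ≤ B i j) ∧ (∀ i j, 0 ≤ C i j) ∧ U = B * C := by
  set D := DD x y z with hDD
  have d123 : 0 < D 1 2 3 := hD _ _ _ (by decide) (by decide) (by decide)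
  have d456 : 0 < D 4 5 6 := hD _ _ _ (by decide) (by decide) (by decide)
  have d230 : 0 < D 2 3 0 := hD _ _ _ (by decide) (by decide) (by decide)
  have d013 : 0 < D 0 1 3 := hD _ _ _ (by decide) (by decide) (by decide)
  have d012 : 0 < D 0 1 2 := hD _ _ _ (by decide) (by decide) (by decide)
  have d560 : 0 < D 5 6 0 := hD _ _ _ (by decide) (by decide) (by decide)
  have d604 : 0 < D 6 0 4 := hD _ _ _ (by decide) (by decide) (by decide)
  have d450 : 0 < D 4 5 0 := hD _ _ _ (by decide) (by decide) (by decide)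
  have d451 : 0 < D 4 5 1 := hD _ _ _ (by decide) (by decide) (by decide)
  have d452 : 0 < D 4 5 2 := hD _ _ _ (by decide) (by decide) (by decide)
  have d124 : 0 < D 1 2 4 := hD _ _ _ (by decide) (by decide) (by decide)
  have d014 : 0 < D 0 1 4 := hD _ _ _ (by decide) (by decide) (by decide)
  have d234 : 0 < D 2 3 4 := hD _ _ _ (by decide) (by decide) (by decide)
  have d236 : 0 < D 2 3 6 := hD _ _ _ (by decide) (by decide) (by decide)
  have d235 : 0 < D 2 3 5 := hD _ _ _ (by decide) (by decide) (by decide)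
  have d563 : 0 < D 5 6 3 := hD _ _ _ (by decide) (by decide) (by decide)
  have d603 : 0 < D 6 0 3 := hD _ _ _ (by decide) (by decide) (by decide)
  have d345 : 0 < D 3 4 5 := hD _ _ _ (by decide) (by decide) (by decide)
  refine construct U hzero hpos (D 2 3 0 / D 1 2 3) (D 0 1 3 / D 1 2 3) (D 0 1 2 / D 1 2 3)
    (D 5 6 0 / D 4 5 6) (D 6 0 4 / D 4 5 6) (D 4 5 0 / D 4 5 6)
    (by positivity) (by positivity) (by positivity) (by positivity) (by positivity) (by positivity)
    ?_ ?_ ?_ ?_ ?_ ?_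
  · intro i
    rw [hU, hU, hU, hU]
    field_simp
    simp only [hDD, DD]; ring
  · intro i
    rw [hU, hU, hU, hU]
    field_simp
    simp only [hDD, DD]; ring
  · rw [hU, hU, div_mul_eq_mul_div, le_div_iff₀ d456]
    change c 1 * D 1 2 0 * _ ≤ D 5 6 0 * (c 1 * D 1 2 4)
    have e : D 1 2 0 = D 0 1 2 := by simp only [hDD, DD]; ring
    rw [e]
    nlinarith [mul_le_mul_of_nonneg_left hA (hc 1).le]
  · rw [hU, hU, div_mul_eq_mul_div, le_div_iff₀ d123]
    change c 4 * D 4 5 0 * _ ≤ D 2 3 0 * (c 4 * D 4 5 1)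
    have e1 : D 4 5 1 * D 0 2 4 = D 4 5 0 * D 1 2 4 + D 4 5 2 * D 0 1 4 := by
      simp only [hDD, DD]; ring
    have e2 : D 2 3 0 * D 1 2 4 = D 0 2 4 * D 1 2 3 + D 2 3 4 * D 0 1 2 := by
      simp only [hDD, DD]; ring
    have e3 : D 4 5 0 * D 1 2 3 ≤ D 2 3 0 * D 4 5 1 := by
      refine le_of_mul_le_mul_right ?_ d124
      have i1 : 0 ≤ D 4 5 2 * D 0 1 4 * D 1 2 3 := by positivity
      have i2 : 0 ≤ D 2 3 4 * D 0 1 2 * D 4 5 1 := by positivity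
      linear_combination i1 + i2 - D 1 2 3 * e1 - D 4 5 1 * e2
    nlinarith [mul_le_mul_of_nonneg_left e3 (hc 4).le]
  · rw [hU, hU, div_mul_eq_mul_div, le_div_iff₀ d123]
    change c 5 * D 5 6 0 * _ ≤ D 0 1 2 * (c 5 * D 5 6 3)
    have e : D 5 6 3 = D 3 5 6 := by simp only [hDD, DD]; ring
    rw [e]
    nlinarith [mul_le_mul_of_nonneg_left hB (hc 5).le]
  · rw [hU, hU, div_mul_eq_mul_div, le_div_iff₀ d456]
    change c 2 * D 2 3 0 * _ ≤ D 4 5 0 * (c 2 * D 2 3 6)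
    have e1 : D 2 3 6 * D 0 3 5 = D 2 3 0 * D 5 6 3 + D 2 3 5 * D 6 0 3 := by
      simp only [hDD, DD]; ring
    have e2 : D 4 5 0 * D 5 6 3 = D 0 3 5 * D 4 5 6 + D 3 4 5 * D 5 6 0 := by
      simp only [hDD, DD]; ring
    have e3 : D 2 3 0 * D 4 5 6 ≤ D 4 5 0 * D 2 3 6 := by
      refine le_of_mul_le_mul_right ?_ d563
      have i1 : 0 ≤ D 2 3 5 * D 6 0 3 * D 4 5 6 := by positivity
      have i2 : 0 ≤ D 3 4 5 * D 5 6 0 * D 2 3 6 := by positivity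
      linear_combination i1 + i2 - D 4 5 6 * e1 - D 2 3 6 * e2
    nlinarith [mul_le_mul_of_nonneg_left e3 (hc 2).le]

lemma exists_normal (U : Matrix (ZMod 7) (ZMod 7) ℝ) (hrank : U.rank = 3)
    (hzero : ∀ i j : ZMod 7, (i = j - 1 ∨ i = j) → U i j = 0)
    (hpos : ∀ i j : ZMod 7, ¬(i = j - 1 ∨ i = j) → 0 < U i j) :
    ∃ x y z c : ZMod 7 → ℝ, (∀ i, 0 < c i) ∧ ∀ i j, U i j = c i * DD x y z i (i+1) j := by
  obtain ⟨p, q, r, x, y, z, h⟩ := exists_factor U hrank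
  have hne : ∀ i, DD x y z i (i+1) (i+2) ≠ 0 := by
    intro i h0
    have a1 : U i i = 0 := hzero _ _ (by clear * -; decide +revert)
    have a2 : U i (i+1) = 0 := hzero _ _ (by clear * -; decide +revert)
    have a3 : 0 < U i (i+2) := hpos _ _ (by clear * -; decide +revert)
    have b1 : 0 < U (i+1) i := hpos _ _ (by clear * -; decide +revert)
    have b2 : U (i+1) (i+1) = 0 := hzero _ _ (by clear * -; decide +revert)
    have b3 : U (i+1) (i+2) = 0 := hzero _ _ (by clear * -; decide +revert)
    have c2 : 0 < U (i+2) (i+1) := hpos _ _ (by clear * -; decide +revert)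
    have key : DD p q r i (i+1) (i+2) * DD x y z i (i+1) (i+2) =
        U i i * (U (i+1) (i+1) * U (i+2) (i+2) - U (i+1) (i+2) * U (i+2) (i+1))
        - U i (i+1) * (U (i+1) i * U (i+2) (i+2) - U (i+1) (i+2) * U (i+2) i)
        + U i (i+2) * (U (i+1) i * U (i+2) (i+1) - U (i+1) (i+1) * U (i+2) i) := by
      simp only [h, DD]; ring
    rw [h0, a1, a2, b2, b3] at key
    have := mul_pos a3 (mul_pos b1 c2)
    nlinarith
  let c : ZMod 7 → ℝ := fun i => U i (i+2) / DD x y z i (i+1) (i+2)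
  have hU : ∀ i j, U i j = c i * DD x y z i (i+1) j := by
    intro i j
    have a1 : U i i = 0 := hzero _ _ (by clear * -; decide +revert)
    have a2 : U i (i+1) = 0 := hzero _ _ (by clear * -; decide +revert)
    have e : U i j * DD x y z i (i+1) (i+2) = U i (i+2) * DD x y z i (i+1) j
        + U i i * DD x y z j (i+1) (i+2) + U i (i+1) * DD x y z i j (i+2) := by
      simp only [h, DD]; ring
    rw [a1, a2] at e
    change _ = U i (i+2) / DD x y z i (i+1) (i+2) * _
    rw [div_mul_eq_mul_div, eq_div_iff (hne i)]
    linarith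
  have hs : ∀ i, 0 < c i * c (i+1) := by
    intro i
    have a3 : 0 < U i (i+2) := hpos _ _ (by clear * -; decide +revert)
    have b1 : 0 < U (i+1) i := hpos _ _ (by clear * -; decide +revert)
    rw [hU] at a3 b1
    have e : DD x y z (i+1) (i+1+1) i = DD x y z i (i+1) (i+2) := by
      rw [show i+1+1 = i+2 by ring]; simp only [DD]; ring
    rw [e] at b1
    have := mul_pos a3 b1
    have sq : 0 < DD x y z i (i+1) (i+2) ^ 2 := by have := hne i; positivity
    refine pos_of_mul_pos_left (b := DD x y z i (i+1) (i+2) ^ 2) ?_ sq.le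
    linarith
  rcases lt_trichotomy (c 0) 0 with h0 | h0 | h0
  · refine ⟨fun i => - x i, fun i => - y i, fun i => - z i, fun i => - c i, ?_, ?_⟩
    · have st : ∀ i, 0 < - c i → 0 < - c (i+1) := by
        intro i hi
        have := hs i
        by_contra hn
        nlinarith
      have k0 : 0 < - c 0 := by linarith
      have k1 := st _ k0
      have k2 := st _ k1
      have k3 := st _ k2
      have k4 := st _ k3
      have k5 := st _ k4
      have k6 := st _ k5
      intro i
      fin_cases i <;> assumption
    · intro i j
      rw [hU]; simp only [DD]; ring
  · have := hs 0
    rw [h0] at this; simp at this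
  · refine ⟨x, y, z, c, ?_, hU⟩
    have st : ∀ i, 0 < c i → 0 < c (i+1) := by
      intro i hi
      exact pos_of_mul_pos_right (hs i) hi.le
    have k1 := st _ h0
    have k2 := st _ k1
    have k3 := st _ k2
    have k4 := st _ k3
    have k5 := st _ k4
    have k6 := st _ k5
    intro i
    fin_cases i <;> assumption

/-- A 7×7 real matrix of classical rank 3, indexed by `ZMod 7`, which
vanishes exactly at the positions `(j-1, j)` and `(j, j)` and is positive elsewhere,
has nonnegative rank strictly less than 7. -/
theorem nonneg_rank_lt_seven_of_heptagon_pattern (U : Matrix (ZMod 7) (ZMod 7) ℝ)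
    (hrank : U.rank = 3)
    (hzero : ∀ i j : ZMod 7, (i = j - 1 ∨ i = j) → U i j = 0)
    (hpos : ∀ i j : ZMod 7, ¬(i = j - 1 ∨ i = j) → 0 < U i j) :
    ∃ (B : Matrix (ZMod 7) (Fin 6) ℝ) (C : Matrix (Fin 6) (ZMod 7) ℝ),
      (∀ i j, 0 ≤ B i j) ∧ (∀ i j, 0 ≤ C i j) ∧ U = B * C := by
  obtain ⟨x, y, z, c, hc, hU⟩ := exists_normal U hrank hzero hpos
  have hD : ∀ i j k, j = i + 1 → k ≠ i → k ≠ j → 0 < DD x y z i j k := by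
    intro i j k hj hki hkj
    subst hj
    have h1 : 0 < U i k := by
      apply hpos
      rintro (h | h)
      · exact hkj (by rw [h]; ring)
      · exact hki h.symm
    rw [hU] at h1
    exact pos_of_mul_pos_right h1 (hc i).le
  obtain ⟨k, hA, hB⟩ := comb x y z hD
  obtain ⟨B, C, nB, nC, e⟩ := main_zero (Matrix.of fun i j => U (k+i) (k+j))
    (fun i j h => hzero _ _ (by
      rcases h with h | h
      · left; rw [h]; ring
      · right; rw [h]))
    (fun i j h => hpos _ _ (by
      rintro (h' | h')
      · apply h; left
        have := congrArg (fun t => t - k) h'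
        ring_nf at this ⊢
        exact this
      · exact h (Or.inr (add_left_cancel h'))))
    (fun i => x (k+i)) (fun i => y (k+i)) (fun i => z (k+i)) (fun i => c (k+i))
    (fun i => hc _)
    (fun i j => by
      simp only [Matrix.of_apply]
      rw [hU, add_assoc]; rfl)
    (fun i j l h1 h2 h3 => hD (k+i) (k+j) (k+l) (by rw [h1]; ring)
      (fun h => h2 (add_left_cancel h)) (fun h => h3 (add_left_cancel h)))
    (by
      have := hA
      simp only [DD, add_zero] at this ⊢
      exact this)
    (by
      have := hB
      simp only [DD, add_zero] at this ⊢
      exact this)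
  refine ⟨Matrix.of fun i l => B (i-k) l, Matrix.of fun l j => C l (j-k),
    fun i j => nB _ _, fun i j => nC _ _, ?_⟩
  ext i j
  have := congrFun (congrFun e (i-k)) (j-k)
  simp only [Matrix.of_apply, add_sub_cancel] at this
  rw [this]
  rfl
end
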